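/- arXiv:2011.01791 — 6 statements merged into one kernel-verified Lean document; each statement's English description precedes it below -/
import Mathlib

section
/- In any identical singleton congestion game (ISCG), for any a priori given partition coalition structure C, there exists a feasible allocation a that is simultaneously: (i) a Nash equilibrium, i.e., P_{=1}(N)-stable, (ii) Pareto efficient, i.e., {N}-stable, and (iii) a partition equilibrium, i.e., C-stable. -/
/-!
Among the feasible assignments of agents to resources, choose one that minimizes, in lexicographic
order, the sum of the squares of the loads and then the sum, over the coalitions `c ∈ C`, of the
squares of the numbers of members of `c` on the resources.

The sum of the squared loads is the sum of the loads met by all agents, so no improvement of the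
grand coalition exists. Since the coalitions are disjoint, a deviation of `c` does not affect the
terms of the others; hence minimality makes the choice locally optimal for every `c ∈ C`, and for
every single agent, with respect to moving one unit of load between two resources.

Local optimality excludes blocking. Let every member of `c` pay `(|c| + 1) ^ load`. The total
payment is a separable convex function of the load profile of `c`, and the large base makes the
local condition say that no such move lowers it. Any two assignments are linked by exchanges along
walks that end in a resource with a deficit, so by convexity a local minimum is a global one,
whereas a blocking deviation would strictly lower the payment.
-/

variable {N M : Type*} [Fintype N] [DecidableEq N] [Fintype M] [DecidableEq M]

/-- `a` is an allocation: resources hold pairwise disjoint sets of agents whose union is `N`. -/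
def IsAllocation (a : M → Finset N) : Prop :=
  (∀ i₁ i₂ : M, i₁ ≠ i₂ → Disjoint (a i₁) (a i₂)) ∧ (∀ j : N, ∃ i : M, j ∈ a i)

/-- `a` respects the feasibility constraint `f`. -/
def Feasible (f a : M → Finset N) : Prop := ∀ i : M, a i ⊆ f i

/-- Coalition `c` blocks allocation `a` via the (feasible) allocation `abar`. -/
def BlocksVia (f : M → Finset N) (c : Finset N) (a abar : M → Finset N) : Prop :=
  IsAllocation abar ∧ Feasible f abar ∧
  (∀ i : M, a i \ c = abar i \ c) ∧
  (∀ j ∈ c, ∀ i₁ i₂ : M, j ∈ a i₁ → j ∈ abar i₂ → (abar i₂).card ≤ (a i₁).card) ∧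
  (∃ j ∈ c, ∃ i₁ i₂ : M, j ∈ a i₁ ∧ j ∈ abar i₂ ∧ (abar i₂).card < (a i₁).card)

/-- Coalition `c` blocks allocation `a`. -/
def Blocks (f : M → Finset N) (c : Finset N) (a : M → Finset N) : Prop :=
  ∃ abar : M → Finset N, BlocksVia f c a abar

/-- The kernel of `a`: the list of resource cardinalities, in nonincreasing order. -/
def kernel (a : M → Finset N) : List ℕ :=
  ((Finset.univ.val.map fun i : M => (a i).card).sort (· ≤ ·)).reverse

/-- The `c`-kernel of `a`: the list `(|c ∩ a i|)_{i ∈ M}`, in nonincreasing order. -/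
def ckernel (c : Finset N) (a : M → Finset N) : List ℕ :=
  ((Finset.univ.val.map fun i : M => (c ∩ a i).card).sort (· ≤ ·)).reverse

/-- The `c`-welfare-kernel of `a`: the list `(|c_n|, |c_{n-1}|, …, |c_1|)`, where `c_s` is the set
of members of `c` assigned to a resource of cardinality `s`, and `n` is the number of agents. -/
def wkernel (c : Finset N) (a : M → Finset N) : List ℕ :=
  (List.range (Fintype.card N)).map fun t =>
    (c.filter fun j => ∃ i : M, j ∈ a i ∧ (a i).card = Fintype.card N - t).card

/-- `a` C-balance dominates `abar`. -/
def BalanceDominates (C : Set (Finset N)) (a abar : M → Finset N) : Prop :=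
  List.Lex (· < ·) (kernel a) (kernel abar) ∨
  (kernel a = kernel abar ∧
    (∀ c ∈ C, ckernel c a = ckernel c abar ∨ List.Lex (· < ·) (ckernel c a) (ckernel c abar)) ∧
    (∃ c ∈ C, List.Lex (· < ·) (ckernel c a) (ckernel c abar)))

/-- `C` is a partition coalition structure. -/
def IsPartitionStructure (C : Set (Finset N)) : Prop :=
  (∀ c ∈ C, c.Nonempty) ∧
  (∀ c ∈ C, ∀ c' ∈ C, c ≠ c' → Disjoint c c') ∧
  (∀ j : N, ∃ c ∈ C, j ∈ c)

open Finset
open Finsupp (single degree)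

section Load

variable {N M : Type*} {c : Finset N} {α β : N → M}

/-- The load profile of an assignment `α` of agents to resources, restricted to the agents in `c`:
it maps each resource to the number of members of `c` on it. Being finitely supported, it makes
sense for infinitely many resources. -/
noncomputable def load (c : Finset N) (α : N → M) : M →₀ ℕ :=
  ∑ j ∈ c, single (α j) 1

lemma load_apply [DecidableEq M] (c : Finset N) (α : N → M) (i : M) :
    load c α i = #{j ∈ c | α j = i} := by
  simp [load, Finsupp.finsetSum_apply, Finsupp.single_apply]

lemma degree_load (c : Finset N) (α : N → M) : (load c α).degree = #c := by
  simp [load]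

lemma load_congr (h : ∀ j ∈ c, α j = β j) : load c α = load c β :=
  sum_congr rfl fun j hj => by rw [h j hj]

lemma load_compl_add_load [Fintype N] [DecidableEq N] (c : Finset N) (α : N → M) :
    load cᶜ α + load c α = load univ α :=
  sum_compl_add_sum c _

lemma load_update_add_single [DecidableEq N] {k : N} (hk : k ∈ c) (α : N → M) (i : M) :
    load c (Function.update α k i) + single (α k) 1 = load c α + single i 1 := by
  have hrest : load (c.erase k) (Function.update α k i) = load (c.erase k) α :=
    load_congr fun j hj => Function.update_of_ne (ne_of_mem_erase hj) i α
  unfold load at hrest ⊢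
  rw [← add_sum_erase _ _ hk, ← add_sum_erase c (fun j => single (α j) 1) hk, hrest,
    Function.update_self]
  abel

lemma load_piecewise_add_load_piecewise [DecidableEq N] (c J : Finset N) (α β : N → M) :
    load c (J.piecewise β α) + load c (J.piecewise α β) = load c α + load c β := by
  simp only [load, ← sum_add_distrib]
  refine sum_congr rfl fun j _ => ?_
  by_cases hj : j ∈ J <;> simp [hj, add_comm]

lemma sum_load {R : Type*} [AddCommMonoid R] (c : Finset N) (α : N → M) (φ : M → R) :
    (load c α).sum (fun i k => k • φ i) = ∑ j ∈ c, φ (α j) := by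
  rw [load, ← Finsupp.sum_finsetSum_index (by simp) (by simp [add_smul])]
  simp

end Load

section Exchange

variable {N M : Type*} [DecidableEq N] {c : Finset N} {α β : N → M} {s : M}

/-- The agents of `J` form a walk from the surplus resource `s`, each moving from its resource
under `α` to its resource under `β`. A walk of maximal length ends in a deficit resource, because
an agent at its end with another target under `β` would prolong it. -/
lemma exists_load_piecewise_add_single_eq (hs : load c β s < load c α s) :
    ∃ (J : Finset N) (t : M), load c α t < load c β t ∧
      load c (J.piecewise β α) + single s 1 = load c α + single t 1 := by
  classical
  obtain ⟨J, hJ, hmax⟩ := exists_max_image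
    {J ∈ c.powerset | ∃ t, load c (J.piecewise β α) + single s 1 = load c α + single t 1} card
    ⟨∅, mem_filter.2 ⟨empty_mem_powerset c, s, by simp⟩⟩
  obtain ⟨hJc, t, ht⟩ := mem_filter.1 hJ
  refine ⟨J, t, ?_, ht⟩
  by_contra! hle
  have hlt : load c β t < load c (J.piecewise β α) t := by
    have := DFunLike.congr_fun ht t
    grind [Finsupp.add_apply]
  simp only [load_apply] at hlt
  obtain ⟨j, hj, hjβ⟩ := exists_mem_notMem_of_card_lt_card hlt
  obtain ⟨hjc, hjt⟩ := mem_filter.1 hj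
  have hjJ : j ∉ J := fun h => hjβ (by simpa [hjc, h] using hjt)
  have hext : load c ((insert j J).piecewise β α) + single s 1 = load c α + single (β j) 1 := by
    have hupd := load_update_add_single hjc (J.piecewise β α) (β j)
    rw [← piecewise_insert, hjt] at hupd
    refine add_right_cancel (b := single t 1) ?_
    rw [add_right_comm, hupd, add_right_comm, ht, add_right_comm]
  have := hmax (insert j J) (mem_filter.2
    ⟨mem_powerset.2 (insert_subset hjc (mem_powerset.1 hJc)), β j, hext⟩)
  rw [card_insert_of_notMem hjJ] at this
  omega

lemma exists_exchange (hs : load c β s < load c α s) :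
    ∃ (J : Finset N) (t : M) (z w : M →₀ ℕ), s ≠ t ∧
      load c α = z + single s 1 ∧ load c (J.piecewise β α) = z + single t 1 ∧
      load c β = w + single t 1 ∧ load c (J.piecewise α β) = w + single s 1 ∧
      w s ≤ z s ∧ z t ≤ w t := by
  classical
  obtain ⟨J, t, ht, hJ⟩ := exists_load_piecewise_add_single_eq hs
  have hst : s ≠ t := by rintro rfl; omega
  obtain ⟨z, hz⟩ := exists_add_of_le (Finsupp.single_le_iff.2 (Nat.one_le_of_lt hs))
  obtain ⟨w, hw⟩ := exists_add_of_le (Finsupp.single_le_iff.2 (Nat.one_le_of_lt ht))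
  rw [add_comm] at hz hw
  have hJz : load c (J.piecewise β α) = z + single t 1 := by
    refine add_right_cancel (b := single s 1) ?_
    rw [hJ, hz, add_right_comm]
  refine ⟨J, t, z, w, hst, hz, hJz, hw, ?_, ?_, ?_⟩
  · have hswap := load_piecewise_add_load_piecewise c J α β
    rw [hJz, hz, hw] at hswap
    refine add_left_cancel (a := z + single t 1) (hswap.trans ?_)
    abel
  · grind [Finsupp.add_apply]
  · grind [Finsupp.add_apply]

end Exchange

section SeparableCost

lemma degree_tsub_add_single {M : Type*} {z w : M →₀ ℕ} {s t : M} (hst : s ≠ t) (hs : w s ≤ z s)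
    (ht : z t ≤ w t) :
    degree (z + single s 1 - (w + single t 1)) = degree (z - w) + 1 := by
  classical
  have hsub : z + single s 1 - (w + single t 1) = z - w + single s 1 := by
    ext i
    grind [Finsupp.add_apply, Finsupp.tsub_apply]
  rw [hsub, map_add, Finsupp.degree_single]

variable {N M R : Type*} [AddCommMonoid R] {g Δ : M → ℕ → R}

lemma sum_add_single_one (hg : ∀ i, g i 0 = 0) (hΔ : ∀ i k, g i (k + 1) = g i k + Δ i k)
    (z : M →₀ ℕ) (s : M) : (z + single s 1).sum g = z.sum g + Δ s (z s) := by
  rw [← Finsupp.add_sum_erase' (z + single s 1) s g hg, ← Finsupp.add_sum_erase' z s g hg,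
    Finsupp.erase_add, Finsupp.erase_single]
  simp [hΔ, add_right_comm]

/-- For a convex separable cost, local optimality of `α` suffices: each exchange turns `β` into an
assignment closer to `α`, and by convexity it does not raise the cost. -/
theorem sum_load_le_of_marginal_le [PartialOrder R] [IsOrderedAddMonoid R]
    (hg : ∀ i, g i 0 = 0) (hΔ : ∀ i k, g i (k + 1) = g i k + Δ i k) (hmono : ∀ i, Monotone (Δ i))
    {F : N → Set M} {c : Finset N} {α β : N → M} (hα : α ∈ Set.univ.pi F) (hβ : β ∈ Set.univ.pi F)
    (hopt : ∀ γ ∈ Set.univ.pi F, ∀ (s t : M) (z : M →₀ ℕ),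
      load c α = z + single s 1 → load c γ = z + single t 1 → Δ s (z s) ≤ Δ t (z t)) :
    (load c α).sum g ≤ (load c β).sum g := by
  classical
  induction hn : degree (load c α - load c β) generalizing β with
  | zero =>
    have hle : load c α ≤ load c β := tsub_eq_zero_iff_le.1 ((Finsupp.degree_eq_zero_iff _).1 hn)
    obtain ⟨d, hd⟩ := exists_add_of_le hle
    have hd0 : d = 0 := by
      simpa [degree_load, Finsupp.degree_eq_zero_iff] using congrArg degree hd
    rw [hd, hd0, add_zero]
  | succ n ih =>
    obtain ⟨s, hs⟩ : ∃ s, load c β s < load c α s := by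
      by_contra! hle
      simp [tsub_eq_zero_of_le (Finsupp.le_def.2 hle)] at hn
    obtain ⟨J, t, z, w, hst, hz, hJz, hw, hJw, hws, hzt⟩ := exists_exchange hs
    have hcloser : degree (load c α - load c (J.piecewise α β)) = n := by
      rw [hz, hw, degree_tsub_add_single hst hws hzt] at hn
      rw [hz, hJw, add_tsub_add_eq_tsub_right]
      exact Nat.succ_injective hn
    calc (load c α).sum g
      _ ≤ (load c (J.piecewise α β)).sum g := ih (J.piecewise_mem_set_pi hα hβ) hcloser
      _ = w.sum g + Δ s (w s) := by rw [hJw, sum_add_single_one hg hΔ]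
      _ ≤ w.sum g + Δ t (w t) := by
        gcongr
        exact (hmono s hws).trans <| (hopt _ (J.piecewise_mem_set_pi hβ hα) s t z hz hJz).trans <|
          hmono t hzt
      _ = (load c β).sum g := by rw [hw, sum_add_single_one hg hΔ]

end SeparableCost

section Payment

/-- The total payment of `k` members of a coalition who share a resource with `r` outsiders, if
each pays `(d + 1) ^ load`. A base that exceeds the size of the coalition makes the payment on one
resource dominate all payments on less crowded ones. -/
def payment (d r k : ℕ) : ℕ :=
  k * (d + 1) ^ (r + k)

/-- The increase of the payment on a resource of load `x` with `k` coalition members when one more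
member joins. -/
def marginalPayment (d x k : ℕ) : ℕ :=
  (d + 1) ^ x * (k * d + d + 1)

lemma payment_succ (d r k : ℕ) :
    payment d r (k + 1) = payment d r k + marginalPayment d (r + k) k := by
  rw [payment, payment, marginalPayment, ← add_assoc, pow_succ]
  ring

lemma monotone_marginalPayment (d r : ℕ) : Monotone fun k => marginalPayment d (r + k) k := by
  intro k l hkl
  dsimp only [marginalPayment]
  gcongr
  exact d.succ_pos

/-- If `x < y`, the powers alone decide, since the second factor lies between `d + 1` and
`(d + 1) ^ 2`. -/
lemma marginalPayment_le_marginalPayment {d x y k l : ℕ} (hk : k ≤ d)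
    (h : toLex (x, k) ≤ toLex (y, l)) : marginalPayment d x k ≤ marginalPayment d y l := by
  unfold marginalPayment
  rcases Prod.Lex.toLex_le_toLex.1 h with hxy | ⟨rfl, hkl⟩
  · calc (d + 1) ^ x * (k * d + d + 1)
      _ ≤ (d + 1) ^ x * (d + 1) ^ 2 := Nat.mul_le_mul_left _ (by nlinarith)
      _ = (d + 1) ^ (x + 1) * (d + 1) := by ring
      _ ≤ (d + 1) ^ y * (l * d + d + 1) :=
        Nat.mul_le_mul (Nat.pow_le_pow_right d.succ_pos hxy) (by omega)
  · dsimp only at hkl ⊢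
    gcongr

end Payment

section Allocation

variable {N M : Type*} [Fintype N] {α : N → M}

open scoped Classical in
/-- The assignment `α`, encoded as the family of the sets of agents on each resource. -/
noncomputable def allocation (α : N → M) (i : M) : Finset N :=
  {j | α j = i}

@[simp]
lemma mem_allocation {j : N} {i : M} : j ∈ allocation α i ↔ α j = i := by
  simp [allocation]

lemma card_allocation (α : N → M) (i : M) : #(allocation α i) = load univ α i := by
  classical
  simp [allocation, load_apply]

lemma isAllocation_allocation (α : N → M) : IsAllocation (allocation α) :=
  ⟨fun _ _ hne => disjoint_left.2 fun _ h₁ h₂ =>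
    hne ((mem_allocation.1 h₁).symm.trans (mem_allocation.1 h₂)), fun j => ⟨α j, by simp⟩⟩

lemma exists_allocation_eq {a : M → Finset N} (ha : IsAllocation a) :
    ∃ α : N → M, allocation α = a := by
  choose α hα using ha.2
  refine ⟨α, funext fun i => Finset.ext fun j => mem_allocation.trans ⟨?_, fun hj => ?_⟩⟩
  · rintro rfl
    exact hα j
  · by_contra hne
    exact disjoint_left.1 (ha.1 _ _ hne) (hα j) hj

end Allocation

section Deviation

variable {N M : Type*} {f : M → Finset N} {c : Finset N} {α β : N → M}

/-- The feasible assignments that agree with `α` outside the coalition `c`, written as a product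
set to make it evident that exchanges stay in it. -/
def deviations (f : M → Finset N) (c : Finset N) (α : N → M) : Set (N → M) :=
  Set.univ.pi fun j => {i | j ∈ f i ∧ (j ∉ c → i = α j)}

lemma self_mem_deviations (hα : ∀ j, j ∈ f (α j)) : α ∈ deviations f c α :=
  fun j _ => ⟨hα j, fun _ => rfl⟩

variable [Fintype N] [DecidableEq N]

lemma load_compl_of_mem_deviations (hβ : β ∈ deviations f c α) : load cᶜ β = load cᶜ α :=
  load_congr fun j hj => (hβ j trivial).2 (mem_compl.1 hj)

lemma load_univ_of_mem_deviations (hβ : β ∈ deviations f c α) :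
    load univ β = load cᶜ α + load c β := by
  rw [← load_compl_add_load c, load_compl_of_mem_deviations hβ]

lemma exists_deviation_of_blocks (h : Blocks f c (allocation α)) :
    ∃ β ∈ deviations f c α, (∀ j ∈ c, load univ β (β j) ≤ load univ α (α j)) ∧
      ∃ j ∈ c, load univ β (β j) < load univ α (α j) := by
  obtain ⟨b, hb, hbf, hoff, hweak, k, hk, _, _, hkα, hkβ, hlt⟩ := h
  obtain ⟨β, rfl⟩ := exists_allocation_eq hb
  simp only [mem_allocation, card_allocation] at hweak hkα hkβ hlt
  subst hkα hkβ
  refine ⟨β, fun j _ => ⟨hbf _ (mem_allocation.2 rfl), fun hj => ?_⟩,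
    fun j hj => hweak j hj _ _ rfl rfl, k, hk, hlt⟩
  have hjβ : j ∈ allocation β (α j) \ c := hoff (α j) ▸ by simp [hj]
  simpa [hj] using hjβ

end Deviation

section ExchangeStable

variable {N M : Type*} [Fintype N] [DecidableEq N] {f : M → Finset N} {c : Finset N} {α β : N → M}

/-- Whenever a deviation of `c` amounts to moving one member of `c` from the resource `s` to the
resource `t`, the load that this member meets on `s`, with ties broken by the number of members of
`c` met there, is at most what it would meet on `t`. Here `z` counts the other members of `c`. -/
def ExchangeStable (f : M → Finset N) (c : Finset N) (α : N → M) : Prop :=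
  ∀ β ∈ deviations f c α, ∀ (s t : M) (z : M →₀ ℕ),
    load c α = z + single s 1 → load c β = z + single t 1 →
      toLex (load cᶜ α s + z s, z s) ≤ toLex (load cᶜ α t + z t, z t)

lemma ExchangeStable.sum_pow_load_le (hα : ∀ j, j ∈ f (α j)) (hex : ExchangeStable f c α)
    (hβ : β ∈ deviations f c α) :
    ∑ j ∈ c, (#c + 1) ^ load univ α (α j) ≤ ∑ j ∈ c, (#c + 1) ^ load univ β (β j) := by
  have hsum : ∀ γ ∈ deviations f c α, ∑ j ∈ c, (#c + 1) ^ load univ γ (γ j)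
      = (load c γ).sum fun i k => payment #c (load cᶜ α i) k := by
    intro γ hγ
    rw [← sum_load c γ fun i => (#c + 1) ^ load univ γ i, load_univ_of_mem_deviations hγ]
    exact Finsupp.sum_congr fun i _ => rfl
  rw [hsum α (self_mem_deviations hα), hsum β hβ]
  refine sum_load_le_of_marginal_le (by simp [payment]) (fun i => payment_succ #c (load cᶜ α i))
    (fun i => monotone_marginalPayment #c (load cᶜ α i)) (self_mem_deviations hα) hβ
    fun γ hγ s t z hs ht => marginalPayment_le_marginalPayment ?_ (hex γ hγ s t z hs ht)
  calc z s
    _ ≤ load c α s := by simp [hs]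
    _ ≤ #c := degree_load c α ▸ Finsupp.le_degree s _

theorem ExchangeStable.not_blocks (hα : ∀ j, j ∈ f (α j)) (hex : ExchangeStable f c α) :
    ¬ Blocks f c (allocation α) := by
  intro hblocks
  obtain ⟨β, hβ, hweak, k, hk, hlt⟩ := exists_deviation_of_blocks hblocks
  have hbase : 1 < #c + 1 := Nat.lt_add_of_pos_left (card_pos.2 ⟨k, hk⟩)
  refine (hex.sum_pow_load_le hα hβ).not_gt (sum_lt_sum (fun j hj => ?_) ⟨k, hk, ?_⟩)
  · exact Nat.pow_le_pow_right hbase.le (hweak j hj)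
  · exact Nat.pow_lt_pow_right hbase hlt

end ExchangeStable

section Potential

variable {N M : Type*} [Fintype N] {f : M → Finset N} {c : Finset N} {C : Set (Finset N)}
  {α : N → M}

/-- The sum of the squares of a load profile, which measures how unbalanced it is. -/
def sumSq (x : M →₀ ℕ) : ℕ :=
  x.sum fun _ k => k ^ 2

lemma sumSq_add_single (z : M →₀ ℕ) (s : M) :
    sumSq (z + single s 1) = sumSq z + (2 * z s + 1) :=
  sum_add_single_one (g := fun _ k => k ^ 2) (Δ := fun _ k => 2 * k + 1) (by simp)
    (fun _ k => by ring) z s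

lemma sumSq_load_univ (α : N → M) : sumSq (load univ α) = ∑ j, load univ α (α j) := by
  rw [← sum_load univ α]
  exact Finsupp.sum_congr fun i _ => sq _

variable [DecidableEq N]

lemma not_blocks_univ
    (hmin : ∀ β : N → M, (∀ j, j ∈ f (β j)) → sumSq (load univ α) ≤ sumSq (load univ β)) :
    ¬ Blocks f univ (allocation α) := by
  intro hblocks
  obtain ⟨β, hβ, hweak, hstrict⟩ := exists_deviation_of_blocks hblocks
  have hle := hmin β fun j => (hβ j trivial).1
  rw [sumSq_load_univ, sumSq_load_univ] at hle
  exact hle.not_gt (sum_lt_sum hweak hstrict)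

lemma exchangeStable_singleton (k : N)
    (hmin : ∀ β : N → M, (∀ j, j ∈ f (β j)) → sumSq (load univ α) ≤ sumSq (load univ β)) :
    ExchangeStable f {k} α := by
  intro β hβ s t z hs ht
  have hz : z = 0 := by
    have := degree_load {k} α
    simpa [hs, Finsupp.degree_eq_zero_iff] using this
  have hle := hmin β fun j => (hβ j trivial).1
  simp only [← load_compl_add_load {k} α, load_univ_of_mem_deviations hβ,
    hs, ht, ← add_assoc, sumSq_add_single, Finsupp.add_apply] at hle
  simp only [Prod.Lex.toLex_le_toLex, hz, Finsupp.zero_apply] at hle ⊢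
  omega

open scoped Classical in
/-- The imbalance of the total loads, followed in lexicographic order by the imbalances of the
coalitions' own load profiles. -/
noncomputable def potential (C : Set (Finset N)) (α : N → M) : ℕ ×ₗ ℕ :=
  toLex (sumSq (load univ α), ∑ c with c ∈ C, sumSq (load c α))

lemma exchangeStable_of_potential_le (hC : C.PairwiseDisjoint id) (hc : c ∈ C)
    (hmin : ∀ β : N → M, (∀ j, j ∈ f (β j)) → potential C α ≤ potential C β) :
    ExchangeStable f c α := by
  classical
  intro β hβ s t z hs ht
  have hcC : c ∈ ({c | c ∈ C} : Finset (Finset N)) := by simpa using hc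
  have hothers : ∑ c' ∈ ({c | c ∈ C} : Finset (Finset N)).erase c, sumSq (load c' β)
      = ∑ c' ∈ ({c | c ∈ C} : Finset (Finset N)).erase c, sumSq (load c' α) := by
    refine sum_congr rfl fun c' hc' => congrArg sumSq (load_congr fun j hj => ?_)
    obtain ⟨hne, hc'⟩ := mem_erase.1 hc'
    have hdisj : Disjoint c' c := hC (mem_filter.1 hc').2 hc hne
    exact (hβ j trivial).2 (disjoint_left.1 hdisj hj)
  have hle := hmin β fun j => (hβ j trivial).1
  simp only [potential, ← add_sum_erase _ _ hcC, hothers, ← load_compl_add_load c α,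
    load_univ_of_mem_deviations hβ, hs, ht, ← add_assoc, sumSq_add_single, Finsupp.add_apply,
    Prod.Lex.toLex_le_toLex] at hle ⊢
  omega

end Potential

theorem exists_nash_pareto_partition_stable_general
    {N M : Type*} [Fintype N] [DecidableEq N]
    (f : M → Finset N) (hf : ∀ j : N, ∃ i : M, j ∈ f i)
    (C : Set (Finset N)) (hC : C.PairwiseDisjoint id) :
    ∃ a : M → Finset N, IsAllocation a ∧ Feasible f a ∧
      (∀ j : N, ¬ Blocks f {j} a) ∧
      (¬ Blocks f Finset.univ a) ∧
      (∀ c ∈ C, ¬ Blocks f c a) := by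
  obtain ⟨α, hα, hmin⟩ := exists_minimalFor_of_wellFoundedLT
    (fun α : N → M => ∀ j, j ∈ f (α j)) (potential C) (Classical.skolem.1 hf)
  have hpot : ∀ β : N → M, (∀ j, j ∈ f (β j)) → potential C α ≤ potential C β :=
    fun β hβ => not_lt.1 fun hlt => hlt.not_ge (hmin hβ hlt.le)
  have hsq : ∀ β : N → M, (∀ j, j ∈ f (β j)) → sumSq (load univ α) ≤ sumSq (load univ β) :=
    fun β hβ => Prod.Lex.monotone_fst _ _ (hpot β hβ)
  exact ⟨allocation α, isAllocation_allocation α, fun i j hj => mem_allocation.1 hj ▸ hα j,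
    fun j => (exchangeStable_singleton j hsq).not_blocks hα, not_blocks_univ hsq,
    fun c hc => (exchangeStable_of_potential_le hC hc hpot).not_blocks hα⟩

/-- Theorem 1: in any ISCG, for any partition coalition structure `C`, there exists a feasible
allocation that is a Nash equilibrium, Pareto efficient, and `C`-stable. -/
theorem exists_nash_pareto_partition_stable
    {N M : Type*} [Fintype N] [DecidableEq N] [Fintype M] [DecidableEq M]
    [Nonempty N] [Nonempty M]
    (f : M → Finset N) (hf : ∀ j : N, ∃ i : M, j ∈ f i)
    (C : Set (Finset N)) (hC : IsPartitionStructure C) :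
    ∃ a : M → Finset N, IsAllocation a ∧ Feasible f a ∧
      (∀ j : N, ¬ Blocks f {j} a) ∧
      (¬ Blocks f Finset.univ a) ∧
      (∀ c ∈ C, ¬ Blocks f c a) := by
  exact exists_nash_pareto_partition_stable_general f hf C fun c hc d hd => hC.2.1 c hc d hd
end

section
/- In any identical singleton congestion game with a partition coalition structure C, every feasible allocation a that is maximal with respect to the C-balance dominance relation (i.e., no feasible allocation C-balance dominates a) is simultaneously a Nash equilibrium, Pareto efficient, and C-stable. -/
variable {N M : Type*} [Fintype N] [DecidableEq N] [Fintype M] [DecidableEq M]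

/-!
Encode allocations by assignments `σ : ι → ρ` of resources to agents. For lists of bounded length,
lexicographic comparison is detected by any sufficiently fast growing weight, so that a Pareto
improvement lowers the kernel: with `w k = k * B ^ k` the weight of the kernel is the sum of
`B ^ load` over all agents.

For `c ∈ C`, a deviation from `σ` to `τ` is a directed multigraph on the resources, with an edge
`σ j ⟶ τ j` for each `j ∈ c`. Moving only the agents of a trail from `i` to `t` shifts one agent
from `i` to `t` and changes nothing else, so maximality bounds the load of `i` by the load of `t`
plus one, and in case of equality does the same for the numbers of members of `c`. Write `k v` for
the number of members of `c` on `v`, and `e v` for the fixed number of other agents there. For large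
`T` the separable function `∑ v, k v * T ^ (e v + k v)`, which is convex in `k`, is then not
decreased by shifts along trails. As for convex-cost flows, such local optimality is global: the
minimal marginal cost over the resources reachable from `v` is a potential that increases along
edges and is a subgradient at `v`. So no deviation lowers this function, which is the sum of
`T ^ load` over the members of `c`, whereas a blocking deviation does.
-/

open Finset

section SortedLists

theorem list_lt_of_sum_map_lt {w : ℕ → ℕ} {l₁ l₂ : List ℕ} (hsorted : l₂.Pairwise (· ≥ ·))
    (hw : ∀ k, l₂.length * w k ≤ w (k + 1)) (hsum : (l₁.map w).sum < (l₂.map w).sum) :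
    l₁ < l₂ := by
  induction l₂ generalizing l₁ with
  | nil => simp at hsum
  | cons b l₂ ih =>
    rcases l₁ with - | ⟨a, l₁⟩
    · exact List.nil_lt_cons b l₂
    obtain ⟨hb, htail⟩ := List.pairwise_cons.mp hsorted
    rcases lt_trichotomy a b with hab | rfl | hba
    · exact List.cons_lt_cons_iff.mpr (.inl hab)
    · refine List.cons_lt_cons_self.mpr (ih htail (fun k => le_trans ?_ (hw k)) ?_)
      · exact Nat.mul_le_mul_right _ (by simp)
      · simpa using hsum
    · have hmono : Monotone w := monotone_nat_of_le_succ fun k =>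
        le_trans (Nat.le_mul_of_pos_left _ (by simp)) (hw k)
      have hle : ∀ k ∈ b :: l₂, k ≤ b := List.forall_mem_cons.mpr ⟨le_rfl, hb⟩
      have : ((b :: l₂).map w).sum ≤ ((a :: l₁).map w).sum :=
        calc ((b :: l₂).map w).sum
            ≤ ((b :: l₂).map w).length • w b :=
              List.sum_le_card_nsmul _ _ (List.forall_mem_map.mpr fun k hk => hmono (hle k hk))
          _ = (b :: l₂).length * w b := by rw [List.length_map, smul_eq_mul]
          _ ≤ w (b + 1) := hw b
          _ ≤ w a := hmono hba
          _ ≤ ((a :: l₁).map w).sum := by simp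
      exact absurd hsum this.not_gt

variable {ρ : Type*}

theorem apply_of_add_single_eq [DecidableEq ρ] {x z : ρ → ℕ} {i t : ρ}
    (h : z + Pi.single i 1 = x + Pi.single t 1) (hit : i ≠ t) :
    z i + 1 = x i ∧ z t = x t + 1 ∧ ∀ v, v ≠ i → v ≠ t → z v = x v := by
  refine ⟨?_, ?_, fun v hi ht => ?_⟩
  · simpa [hit] using congrFun h i
  · simpa [hit.symm] using congrFun h t
  · simpa [hi, ht] using congrFun h v

variable [Fintype ρ]

/-- The values of `x` in nonincreasing order: the common form of `kernel` and `ckernel`. -/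
def sortedDesc (x : ρ → ℕ) : List ℕ :=
  ((univ.val.map x).sort (· ≤ ·)).reverse

theorem sum_map_sortedDesc (w : ℕ → ℕ) (x : ρ → ℕ) :
    ((sortedDesc x).map w).sum = ∑ v, w (x v) := by
  rw [sortedDesc, List.map_reverse, List.sum_reverse, ← Multiset.sum_coe, ← Multiset.map_coe,
    Multiset.sort_eq, Multiset.map_map]
  rfl

theorem sortedDesc_lt_of_sum_lt {w : ℕ → ℕ} {x z : ρ → ℕ}
    (hw : ∀ k, Fintype.card ρ * w k ≤ w (k + 1)) (h : ∑ v, w (z v) < ∑ v, w (x v)) :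
    sortedDesc z < sortedDesc x := by
  refine list_lt_of_sum_map_lt (w := w) ?_ (by simpa [sortedDesc] using hw) ?_
  · exact List.pairwise_reverse.mpr (Multiset.pairwise_sort _ _)
  · rwa [sum_map_sortedDesc, sum_map_sortedDesc]

theorem sortedDesc_comp_equiv (x : ρ → ℕ) (e : ρ ≃ ρ) : sortedDesc (x ∘ e) = sortedDesc x := by
  rw [sortedDesc, sortedDesc, ← Multiset.map_map, Multiset.map_univ_val_equiv]

variable [DecidableEq ρ] {x z : ρ → ℕ} {i t : ρ}

theorem sortedDesc_lt_of_transfer (h : z + Pi.single i 1 = x + Pi.single t 1)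
    (hlt : x t + 1 < x i) : sortedDesc z < sortedDesc x := by
  have hit : i ≠ t := by rintro rfl; omega
  obtain ⟨hi, ht, hrest⟩ := apply_of_add_single_eq h hit
  set B := Fintype.card ρ + 2
  refine sortedDesc_lt_of_sum_lt (w := fun k => B ^ k) (fun k => ?_) ?_
  · rw [pow_succ']
    exact Nat.mul_le_mul_right _ (by omega)
  have hcompl : ∑ v ∈ {i, t}ᶜ, B ^ z v = ∑ v ∈ {i, t}ᶜ, B ^ x v :=
    sum_congr rfl fun v hv => by
      rw [mem_compl, mem_insert, mem_singleton, not_or] at hv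
      rw [hrest v hv.1 hv.2]
  have hpair : B ^ z i + B ^ z t < B ^ x i + B ^ x t :=
    calc B ^ z i + B ^ z t ≤ B ^ z i + B ^ z i := by gcongr <;> omega
      _ = 2 * B ^ z i := (two_mul _).symm
      _ ≤ B * B ^ z i := Nat.mul_le_mul_right _ (by omega)
      _ = B ^ x i := by rw [← pow_succ', hi]
      _ < B ^ x i + B ^ x t := Nat.lt_add_of_pos_right (by positivity)
  rw [← sum_add_sum_compl {i, t}, ← sum_add_sum_compl {i, t} fun v => B ^ x v, hcompl,
    sum_pair hit, sum_pair hit]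
  exact Nat.add_lt_add_right hpair _

theorem sortedDesc_eq_of_transfer (h : z + Pi.single i 1 = x + Pi.single t 1)
    (heq : x i = x t + 1) : sortedDesc z = sortedDesc x := by
  have hit : i ≠ t := by rintro rfl; omega
  obtain ⟨hi, ht, hrest⟩ := apply_of_add_single_eq h hit
  have hswap : z = x ∘ Equiv.swap i t := by
    funext v
    by_cases hvi : v = i
    · rw [hvi, Function.comp_apply, Equiv.swap_apply_left]
      omega
    by_cases hvt : v = t
    · rw [hvt, Function.comp_apply, Equiv.swap_apply_right]
      omega
    rw [Function.comp_apply, Equiv.swap_apply_of_ne_of_ne hvi hvt, hrest v hvi hvt]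
  rw [hswap, sortedDesc_comp_equiv]

end SortedLists

section Assignments

variable {ι ρ : Type*} [DecidableEq ρ]

/-- The number of members of `c` that the assignment `σ` places on each resource. -/
def memberCount (c : Finset ι) (σ : ι → ρ) (v : ρ) : ℕ := #{j ∈ c | σ j = v}

theorem memberCount_eq_sum_single (c : Finset ι) (σ : ι → ρ) :
    memberCount c σ = ∑ j ∈ c, Pi.single (σ j) 1 := by
  funext v
  simp only [memberCount, card_filter, Finset.sum_apply, Pi.single_apply, eq_comm]

theorem memberCount_congr {c : Finset ι} {σ τ : ι → ρ} (h : ∀ j ∈ c, τ j = σ j) :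
    memberCount c τ = memberCount c σ := by
  rw [memberCount_eq_sum_single, memberCount_eq_sum_single]
  exact sum_congr rfl fun j hj => by rw [h j hj]

theorem memberCount_le_card (c : Finset ι) (σ : ι → ρ) (v : ρ) : memberCount c σ v ≤ #c :=
  card_filter_le _ _

theorem sum_memberCount_nsmul [Fintype ρ] {R : Type*} [AddCommMonoid R] (c : Finset ι) (σ : ι → ρ)
    (h : ρ → R) : ∑ v, memberCount c σ v • h v = ∑ j ∈ c, h (σ j) := by
  simp only [← sum_fiberwise' c σ h, sum_const, memberCount]

variable [DecidableEq ι]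

theorem memberCount_update (c : Finset ι) (σ : ι → ρ) {j : ι} (hj : j ∈ c) (b : ρ) :
    memberCount c (Function.update σ j b) + Pi.single (σ j) 1 =
      memberCount c σ + Pi.single b 1 := by
  have hrest : memberCount (c.erase j) (Function.update σ j b) = memberCount (c.erase j) σ :=
    memberCount_congr fun k hk => Function.update_of_ne (ne_of_mem_erase hk) _ _
  simp only [memberCount_eq_sum_single] at hrest ⊢
  rw [← sum_erase_add _ _ hj, ← sum_erase_add c _ hj, hrest, Function.update_self,
    add_right_comm]

theorem memberCount_add_memberCount_compl [Fintype ι] (c : Finset ι) (σ : ι → ρ) (v : ρ) :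
    memberCount c σ v + memberCount cᶜ σ v = memberCount univ σ v := by
  simp only [memberCount_eq_sum_single, ← sum_add_sum_compl c, Pi.add_apply]

end Assignments

section Trails

variable {ι ρ : Type*} [DecidableEq ι] {σ τ : ι → ρ}

/-- `Trail σ τ i t S`: the elements of `S`, each regarded as an edge from `σ j` to `τ j`, can be
ordered into a walk from `i` to `t` that uses each of them exactly once. -/
inductive Trail (σ τ : ι → ρ) : ρ → ρ → Finset ι → Prop
  | nil (v : ρ) : Trail σ τ v v ∅
  | cons {j : ι} {t : ρ} {S : Finset ι} : Trail σ τ (τ j) t S → j ∉ S →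
      Trail σ τ (σ j) t (insert j S)

namespace Trail

variable {i t : ρ} {S : Finset ι}

theorem exists_dropUntil (h : Trail σ τ i t S) {j : ι} (hj : j ∈ S) :
    ∃ S' ⊆ S, Trail σ τ (σ j) t S' := by
  induction h with
  | nil => exact absurd hj (notMem_empty j)
  | @cons k t S h hk ih =>
    rcases mem_insert.mp hj with rfl | hj
    · exact ⟨_, subset_rfl, h.cons hk⟩
    · obtain ⟨S', hS', h'⟩ := ih hj
      exact ⟨S', hS'.trans (subset_insert k S), h'⟩

theorem exists_cons {j : ι} (h : Trail σ τ (τ j) t S) :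
    ∃ S' ⊆ insert j S, Trail σ τ (σ j) t S' := by
  by_cases hj : j ∈ S
  · rw [insert_eq_of_mem hj]
    exact h.exists_dropUntil hj
  · exact ⟨_, subset_rfl, h.cons hj⟩

theorem memberCount_piecewise [DecidableEq ρ] (h : Trail σ τ i t S) {c : Finset ι} (hS : S ⊆ c) :
    memberCount c (S.piecewise τ σ) + Pi.single i 1 = memberCount c σ + Pi.single t 1 := by
  induction h with
  | nil => rw [piecewise_empty]
  | @cons j t S _ hj ih =>
    obtain ⟨hjc, hSc⟩ := insert_subset_iff.mp hS
    have hstep := memberCount_update c (S.piecewise τ σ) hjc (τ j)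
    rw [piecewise_eq_of_notMem _ _ _ hj] at hstep
    rw [piecewise_insert, hstep, ih hSc]

theorem exists_potential [Finite ρ] {L : Type*} [LinearOrder L] {c : Finset ι}
    {loss gain : ρ → L} (h : ∀ i t, ∀ S ⊆ c, Trail σ τ i t S → loss i ≤ gain t) :
    ∃ g : ρ → L, (∀ j ∈ c, g (σ j) ≤ g (τ j)) ∧ (∀ v, loss v ≤ g v) ∧ ∀ v, g v ≤ gain v := by
  classical
  have := Fintype.ofFinite ρ
  let reach (v : ρ) : Finset ρ := {t | ∃ S ⊆ c, Trail σ τ v t S}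
  have mem_reach {v t : ρ} : t ∈ reach v ↔ ∃ S ⊆ c, Trail σ τ v t S := by simp [reach]
  have self_mem (v : ρ) : v ∈ reach v := mem_reach.mpr ⟨∅, empty_subset c, .nil v⟩
  refine ⟨fun v => (reach v).inf' ⟨v, self_mem v⟩ gain, fun j hj => inf'_mono _ ?_ _,
    fun v => le_inf' _ _ fun t ht => ?_, fun v => inf'_le _ (self_mem v)⟩
  · intro t ht
    obtain ⟨S, hS, hT⟩ := mem_reach.mp ht
    obtain ⟨S', hS', hT'⟩ := hT.exists_cons
    exact mem_reach.mpr ⟨S', hS'.trans (insert_subset hj hS), hT'⟩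
  · obtain ⟨S, hS, hT⟩ := mem_reach.mp ht
    exact h v t S hS hT

end Trail

end Trails

section ConvexCosts

variable {R : Type*} [CommRing R]

/-- The sum of `T ^ load` over `k` coalition members sharing a resource with `e` outsiders. -/
def coalitionCost (T : R) (e k : ℕ) : R := k * T ^ (e + k)

theorem coalitionCost_succ_sub (T : R) (e k : ℕ) :
    coalitionCost T e (k + 1) - coalitionCost T e k = T ^ (e + k) * (k * (T - 1) + T) := by
  simp only [coalitionCost]
  push_cast
  ring

variable [LinearOrder R] [IsStrictOrderedRing R]

theorem add_mul_le_of_monotone_diff {s : ℕ → R} (hs : Monotone fun k => s (k + 1) - s k)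
    {n : ℕ} {g : R} (hloss : s n - s (n - 1) ≤ g) (hgain : g ≤ s (n + 1) - s n) (m : ℕ) :
    s n + (m - n) * g ≤ s m := by
  rcases le_total n m with hnm | hmn
  · have hsum : #(Ico n m) • g ≤ ∑ k ∈ Ico n m, (s (k + 1) - s k) :=
      card_nsmul_le_sum _ _ _ fun k hk => hgain.trans (hs (mem_Ico.mp hk).1)
    rw [sum_Ico_sub _ hnm, Nat.card_Ico, nsmul_eq_mul, Nat.cast_sub hnm] at hsum
    linarith
  · have hsum : ∑ k ∈ Ico m n, (s (k + 1) - s k) ≤ #(Ico m n) • g := by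
      refine sum_le_card_nsmul _ _ _ fun k hk => le_trans ?_ hloss
      obtain ⟨-, hkn⟩ := mem_Ico.mp hk
      simpa [Nat.sub_add_cancel (Nat.one_le_of_lt hkn)] using hs (Nat.le_sub_one_of_lt hkn)
    rw [sum_Ico_sub _ hmn, Nat.card_Ico, nsmul_eq_mul, Nat.cast_sub hmn] at hsum
    linarith

theorem sum_le_sum_of_trail {ι ρ : Type*} [DecidableEq ι] [Fintype ρ] [DecidableEq ρ]
    {c : Finset ι} {σ τ : ι → ρ} {F : ρ → ℕ → R} (hF : ∀ v, Monotone fun k => F v (k + 1) - F v k)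
    (htrail : ∀ i t, ∀ S ⊆ c, Trail σ τ i t S →
      F i (memberCount c σ i) - F i (memberCount c σ i - 1) ≤
        F t (memberCount c σ t + 1) - F t (memberCount c σ t)) :
    ∑ v, F v (memberCount c σ v) ≤ ∑ v, F v (memberCount c τ v) := by
  obtain ⟨g, hmono, hloss, hgain⟩ := Trail.exists_potential htrail
  have hflow : 0 ≤ ∑ v, ((memberCount c τ v : R) - memberCount c σ v) * g v := by
    simp only [sub_mul, sum_sub_distrib, ← nsmul_eq_mul, sum_memberCount_nsmul]
    exact sub_nonneg.mpr (sum_le_sum hmono)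
  calc ∑ v, F v (memberCount c σ v)
      ≤ ∑ v, (F v (memberCount c σ v) + ((memberCount c τ v : R) - memberCount c σ v) * g v) := by
        rw [sum_add_distrib]
        exact le_add_of_nonneg_right hflow
    _ ≤ ∑ v, F v (memberCount c τ v) := sum_le_sum fun v _ =>
        add_mul_le_of_monotone_diff (hF v) (hloss v) (hgain v) _

theorem monotone_coalitionCost_diff {T : R} (hT : 1 ≤ T) (e : ℕ) :
    Monotone fun k => coalitionCost T e (k + 1) - coalitionCost T e k := by
  intro k l hkl
  have : 0 ≤ T - 1 := sub_nonneg.mpr hT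
  simp only [coalitionCost_succ_sub]
  gcongr

theorem coalitionCost_loss_le_gain {T : R} (hT : 1 ≤ T) {e e' q q' : ℕ} (hq : (q : R) ≤ T)
    (hload : e + q ≤ e' + q' + 1) (hcount : e + q = e' + q' + 1 → q ≤ q' + 1) :
    coalitionCost T e q - coalitionCost T e (q - 1) ≤
      coalitionCost T e' (q' + 1) - coalitionCost T e' q' := by
  have : 0 ≤ T := zero_le_one.trans hT
  have : 0 ≤ T - 1 := sub_nonneg.mpr hT
  rw [coalitionCost_succ_sub]
  rcases hload.lt_or_eq with hlt | heq
  · calc coalitionCost T e q - coalitionCost T e (q - 1)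
        ≤ coalitionCost T e q := sub_le_self _ (by unfold coalitionCost; positivity)
      _ ≤ T ^ (e' + q') * T := by
        rw [coalitionCost, mul_comm]
        exact mul_le_mul (pow_le_pow_right₀ hT (Nat.lt_succ_iff.mp hlt)) hq (by positivity)
          (by positivity)
      _ ≤ T ^ (e' + q') * (q' * (T - 1) + T) := by
        gcongr
        exact le_add_of_nonneg_left (by positivity)
  · rcases q with - | k
    · simp only [Nat.zero_sub, sub_self]
      positivity
    · have hk : k ≤ q' := Nat.le_of_succ_le_succ (hcount heq)
      have hpow : e + k = e' + q' := by omega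
      rw [Nat.add_sub_cancel, coalitionCost_succ_sub, hpow]
      gcongr

end ConvexCosts

section Allocations

variable {ι ρ : Type*} [Fintype ι] [DecidableEq ρ]

/-- The allocation corresponding to the assignment `σ` of resources to agents. -/
def alloc (σ : ι → ρ) (v : ρ) : Finset ι := {j | σ j = v}

@[simp]
theorem mem_alloc {σ : ι → ρ} {v : ρ} {j : ι} : j ∈ alloc σ v ↔ σ j = v := by
  simp [alloc]

theorem isAllocation_alloc (σ : ι → ρ) : IsAllocation (alloc σ) :=
  ⟨fun _ _ h => disjoint_left.mpr fun _ h₁ h₂ => h ((mem_alloc.mp h₁).symm.trans (mem_alloc.mp h₂)),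
    fun j => ⟨σ j, mem_alloc.mpr rfl⟩⟩

theorem IsAllocation.exists_eq_alloc {a : ρ → Finset ι} (ha : IsAllocation a) :
    ∃ σ : ι → ρ, a = alloc σ := by
  obtain ⟨hdisj, hcover⟩ := ha
  choose σ hσ using hcover
  refine ⟨σ, funext fun v => Finset.ext fun j => ?_⟩
  rw [mem_alloc]
  constructor
  · intro hj
    by_contra hne
    exact disjoint_left.mp (hdisj _ _ hne) (hσ j) hj
  · rintro rfl
    exact hσ j

theorem feasible_alloc {f : ρ → Finset ι} {σ : ι → ρ} :
    Feasible f (alloc σ) ↔ ∀ j, j ∈ f (σ j) :=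
  ⟨fun h j => h (σ j) (mem_alloc.mpr rfl), fun h _ j hj => mem_alloc.mp hj ▸ h j⟩

theorem kernel_alloc [Fintype ρ] (σ : ι → ρ) : kernel (alloc σ) = sortedDesc (memberCount univ σ) :=
  rfl

variable [DecidableEq ι]

theorem ckernel_alloc [Fintype ρ] (c : Finset ι) (σ : ι → ρ) :
    ckernel c (alloc σ) = sortedDesc (memberCount c σ) := by
  simp only [ckernel, alloc, inter_filter, inter_univ]
  rfl

theorem forall_alloc_sdiff_eq_iff {c : Finset ι} {σ τ : ι → ρ} :
    (∀ v, alloc σ v \ c = alloc τ v \ c) ↔ ∀ j ∉ c, τ j = σ j := by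
  simp only [Finset.ext_iff, mem_sdiff, mem_alloc, and_congr_left_iff]
  exact ⟨fun h j hj => (h (σ j) j hj).mp rfl, fun h v j hj => by rw [h j hj]⟩

theorem blocks_alloc_iff {f : ρ → Finset ι} {c : Finset ι} {σ : ι → ρ} :
    Blocks f c (alloc σ) ↔ ∃ τ : ι → ρ, (∀ j, j ∈ f (τ j)) ∧ (∀ j ∉ c, τ j = σ j) ∧
      (∀ j ∈ c, memberCount univ τ (τ j) ≤ memberCount univ σ (σ j)) ∧
      ∃ j ∈ c, memberCount univ τ (τ j) < memberCount univ σ (σ j) := by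
  have hvia (τ : ι → ρ) : BlocksVia f c (alloc σ) (alloc τ) ↔
      (∀ j, j ∈ f (τ j)) ∧ (∀ j ∉ c, τ j = σ j) ∧
        (∀ j ∈ c, memberCount univ τ (τ j) ≤ memberCount univ σ (σ j)) ∧
        ∃ j ∈ c, memberCount univ τ (τ j) < memberCount univ σ (σ j) := by
    have hforall (j : ι) (P : ρ → ρ → Prop) :
        (∀ i₁ i₂, σ j = i₁ → τ j = i₂ → P i₁ i₂) ↔ P (σ j) (τ j) :=
      ⟨fun h => h _ _ rfl rfl, by rintro h _ _ rfl rfl; exact h⟩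
    simp only [BlocksVia, isAllocation_alloc, feasible_alloc, forall_alloc_sdiff_eq_iff, mem_alloc,
      true_and, hforall, exists_eq_left', exists_and_left]
    rfl
  constructor
  · rintro ⟨abar, h⟩
    obtain ⟨τ, rfl⟩ := h.1.exists_eq_alloc
    exact ⟨τ, (hvia τ).mp h⟩
  · rintro ⟨τ, h⟩
    exact ⟨alloc τ, (hvia τ).mpr h⟩

end Allocations

section Maximality

variable {ι ρ : Type*} [Fintype ι] [DecidableEq ι] [Fintype ρ]

/-- No feasible allocation `C`-balance dominates `a`. -/
def IsBalanceMaximal (f : ρ → Finset ι) (C : Set (Finset ι)) (a : ρ → Finset ι) : Prop :=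
  ∀ abar : ρ → Finset ι, IsAllocation abar → Feasible f abar → ¬ BalanceDominates C abar a

namespace IsBalanceMaximal

variable [DecidableEq ρ] {f : ρ → Finset ι} {C : Set (Finset ι)} {c : Finset ι} {σ τ : ι → ρ}
  {i t : ρ}

theorem not_kernel_lt (hmax : IsBalanceMaximal f C (alloc σ)) (hτ : ∀ j, j ∈ f (τ j)) :
    ¬ sortedDesc (memberCount univ τ) < sortedDesc (memberCount univ σ) := by
  rw [← kernel_alloc, ← kernel_alloc]
  exact fun hlt => hmax _ (isAllocation_alloc τ) (feasible_alloc.mpr hτ) (.inl hlt)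

theorem not_ckernel_lt (hmax : IsBalanceMaximal f C (alloc σ)) (hC : C.PairwiseDisjoint id)
    (hc : c ∈ C) (hτ : ∀ j, j ∈ f (τ j)) (hoff : ∀ j ∉ c, τ j = σ j)
    (hkernel : sortedDesc (memberCount univ τ) = sortedDesc (memberCount univ σ)) :
    ¬ sortedDesc (memberCount c τ) < sortedDesc (memberCount c σ) := by
  intro hlt
  rw [← ckernel_alloc, ← ckernel_alloc] at hlt
  refine hmax _ (isAllocation_alloc τ) (feasible_alloc.mpr hτ)
    (.inr ⟨hkernel, fun d hd => ?_, c, hc, hlt⟩)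
  rcases eq_or_ne d c with rfl | hdc
  · exact .inr hlt
  · have hcount : memberCount d τ = memberCount d σ :=
      memberCount_congr fun j hj => hoff j (disjoint_left.mp (hC hd hc hdc) hj)
    exact .inl (by rw [ckernel_alloc, ckernel_alloc, hcount])

theorem load_le_of_transfer (hmax : IsBalanceMaximal f C (alloc σ)) (hτ : ∀ j, j ∈ f (τ j))
    (h : memberCount univ τ + Pi.single i 1 = memberCount univ σ + Pi.single t 1) :
    memberCount univ σ i ≤ memberCount univ σ t + 1 :=
  not_lt.mp fun hlt => hmax.not_kernel_lt hτ (sortedDesc_lt_of_transfer h hlt)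

theorem memberCount_le_of_transfer (hmax : IsBalanceMaximal f C (alloc σ))
    (hC : C.PairwiseDisjoint id) (hc : c ∈ C) (hτ : ∀ j, j ∈ f (τ j)) (hoff : ∀ j ∉ c, τ j = σ j)
    (hload : memberCount univ τ + Pi.single i 1 = memberCount univ σ + Pi.single t 1)
    (hcount : memberCount c τ + Pi.single i 1 = memberCount c σ + Pi.single t 1)
    (heq : memberCount univ σ i = memberCount univ σ t + 1) :
    memberCount c σ i ≤ memberCount c σ t + 1 :=
  not_lt.mp fun hlt => hmax.not_ckernel_lt hC hc hτ hoff (sortedDesc_eq_of_transfer hload heq)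
    (sortedDesc_lt_of_transfer hcount hlt)

theorem sum_pow_load_le (hmax : IsBalanceMaximal f C (alloc σ)) (hC : C.PairwiseDisjoint id)
    (hc : c ∈ C) (hσ : ∀ j, j ∈ f (σ j)) (hτ : ∀ j, j ∈ f (τ j)) (hoff : ∀ j ∉ c, τ j = σ j)
    {T : ℤ} (hT : 1 ≤ T) (hcT : #c ≤ T) :
    ∑ j ∈ c, T ^ memberCount univ σ (σ j) ≤ ∑ j ∈ c, T ^ memberCount univ τ (τ j) := by
  let outsiders : ρ → ℕ := memberCount cᶜ σ
  have hloadσ (v : ρ) : outsiders v + memberCount c σ v = memberCount univ σ v := by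
    rw [add_comm, memberCount_add_memberCount_compl]
  have hloadτ (v : ρ) : outsiders v + memberCount c τ v = memberCount univ τ v := by
    rw [add_comm, ← memberCount_add_memberCount_compl c τ,
      memberCount_congr (σ := σ) (τ := τ) fun j hj => hoff j (mem_compl.mp hj)]
  have hle := sum_le_sum_of_trail (c := c) (σ := σ) (τ := τ)
    (fun v => monotone_coalitionCost_diff hT (outsiders v)) fun i t S hS htrail => by
      have hfeas (j : ι) : j ∈ f (S.piecewise τ σ j) :=
        S.piecewise_cases τ σ (fun v => j ∈ f v) (hτ j) (hσ j)
      have hoffS (j : ι) (hj : j ∉ c) : S.piecewise τ σ j = σ j :=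
        piecewise_eq_of_notMem _ _ _ fun hjS => hj (hS hjS)
      have hload := htrail.memberCount_piecewise (subset_univ S)
      refine coalitionCost_loss_le_gain hT ?_ ?_ ?_
      · exact le_trans (mod_cast memberCount_le_card c σ i) hcT
      · simpa only [hloadσ] using hmax.load_le_of_transfer hfeas hload
      · simpa only [hloadσ] using
          hmax.memberCount_le_of_transfer hC hc hfeas hoffS hload (htrail.memberCount_piecewise hS)
  simpa only [coalitionCost, hloadσ, hloadτ, ← nsmul_eq_mul, sum_memberCount_nsmul] using hle

theorem not_blocks_singleton (hmax : IsBalanceMaximal f C (alloc σ)) (j : ι) :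
    ¬ Blocks f {j} (alloc σ) := by
  intro hblocks
  obtain ⟨τ, hτ, hoff, -, k, hk, hlt⟩ := blocks_alloc_iff.mp hblocks
  obtain rfl := mem_singleton.mp hk
  have hupdate : Function.update σ k (τ k) = τ :=
    (Function.eq_update_iff.mpr ⟨rfl, fun l hl => hoff l (by simpa using hl)⟩).symm
  have htransfer := memberCount_update univ σ (mem_univ k) (τ k)
  rw [hupdate] at htransfer
  have hle := hmax.load_le_of_transfer hτ htransfer
  rcases eq_or_ne (σ k) (τ k) with heq | hne
  · rw [heq] at htransfer hlt
    exact hlt.ne (congrFun (add_right_cancel htransfer) (τ k))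
  · have := (apply_of_add_single_eq htransfer hne).2.1
    omega

theorem not_blocks_univ (hmax : IsBalanceMaximal f C (alloc σ)) :
    ¬ Blocks f univ (alloc σ) := by
  intro hblocks
  obtain ⟨τ, hτ, -, hle, j, hj, hlt⟩ := blocks_alloc_iff.mp hblocks
  set B := Fintype.card ρ + 2
  refine hmax.not_kernel_lt hτ (sortedDesc_lt_of_sum_lt (w := fun k => k * B ^ k) (fun k => ?_) ?_)
  · calc Fintype.card ρ * (k * B ^ k) = k * (Fintype.card ρ * B ^ k) := by ring
      _ ≤ (k + 1) * (B * B ^ k) := by gcongr <;> omega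
      _ = (k + 1) * B ^ (k + 1) := by rw [pow_succ']
  · simp only [← smul_eq_mul, sum_memberCount_nsmul univ _ fun v => B ^ memberCount univ _ v]
    exact sum_lt_sum (fun k hk => Nat.pow_le_pow_right (by omega) (hle k hk))
      ⟨j, hj, Nat.pow_lt_pow_right (by omega) hlt⟩

theorem not_blocks_of_mem (hmax : IsBalanceMaximal f C (alloc σ)) (hC : C.PairwiseDisjoint id)
    (hσ : ∀ j, j ∈ f (σ j)) (hc : c ∈ C) : ¬ Blocks f c (alloc σ) := by
  intro hblocks
  obtain ⟨τ, hτ, hoff, hle, j, hj, hlt⟩ := blocks_alloc_iff.mp hblocks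
  have hT : (1 : ℤ) < #c + 2 := by omega
  have hsum := hmax.sum_pow_load_le hC hc hσ hτ hoff hT.le (by omega)
  refine hsum.not_gt (sum_lt_sum (fun k hk => ?_) ⟨j, hj, ?_⟩)
  · exact pow_le_pow_right₀ hT.le (hle k hk)
  · exact pow_lt_pow_right₀ hT hlt

end IsBalanceMaximal

end Maximality

theorem maximal_is_nash_pareto_partition_stable_general
    {ι ρ : Type*} [Fintype ι] [DecidableEq ι] [Fintype ρ]
    (f : ρ → Finset ι) (C : Set (Finset ι)) (hC : C.PairwiseDisjoint id)
    (a : ρ → Finset ι) (ha : IsAllocation a) (haf : Feasible f a)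
    (hmax : IsBalanceMaximal f C a) :
    (∀ j : ι, ¬ Blocks f {j} a) ∧ ¬ Blocks f univ a ∧ ∀ c ∈ C, ¬ Blocks f c a := by
  classical
  obtain ⟨σ, rfl⟩ := ha.exists_eq_alloc
  exact ⟨hmax.not_blocks_singleton, hmax.not_blocks_univ,
    fun _ => hmax.not_blocks_of_mem hC (feasible_alloc.mp haf)⟩

/-- Every feasible allocation maximal w.r.t. the `C`-balance dominance relation is a Nash
equilibrium, Pareto efficient, and `C`-stable. -/
theorem maximal_is_nash_pareto_partition_stable
    {N M : Type*} [Fintype N] [DecidableEq N] [Fintype M] [DecidableEq M]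
    [Nonempty N] [Nonempty M]
    (f : M → Finset N) (hf : ∀ j : N, ∃ i : M, j ∈ f i)
    (C : Set (Finset N)) (hC : IsPartitionStructure C)
    (a : M → Finset N) (ha : IsAllocation a) (haf : Feasible f a)
    (hmax : ∀ abar : M → Finset N, IsAllocation abar → Feasible f abar →
      ¬ BalanceDominates C abar a) :
    (∀ j : N, ¬ Blocks f {j} a) ∧
    (¬ Blocks f Finset.univ a) ∧
    (∀ c ∈ C, ¬ Blocks f c a) := by
  exact maximal_is_nash_pareto_partition_stable_general f C hC.2.1 a ha haf hmax
end

section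
/- In any identical singleton congestion game with a partition coalition structure C, every feasible allocation a that is maximal with respect to the C-balance dominance relation is a Nash equilibrium, i.e., no singleton coalition {j} blocks a. -/
/-!
If every agent who changes resource ends up strictly better off, look at the resources whose set of
agents changes. The new load of such a resource is smaller than the old load of another one, or
of itself: either somebody arrived, and came from a more crowded resource that has thereby changed
too, or the resource only lost agents. So the multiset of loads drops in the Dershowitz–Manna
order, that is, the kernel drops lexicographically. A unilateral improving move is of this kind,
and therefore contradicts maximality through the first clause of balance dominance alone.
-/

variable {N M : Type*} [Fintype N] [DecidableEq N] [Fintype M] [DecidableEq M]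

section MultisetOrder

variable {α ι : Type*}

theorem exists_le_of_isDershowitzMannaLT [Preorder α] {s t : Multiset α} {a : α}
    (h : s.IsDershowitzMannaLT t) (ha : a ∈ s) : ∃ b ∈ t, a ≤ b := by
  obtain ⟨X, Y, Z, -, rfl, rfl, hYZ⟩ := h
  rcases Multiset.mem_add.1 ha with haX | haY
  · exact ⟨a, Multiset.mem_add.2 (.inl haX), le_rfl⟩
  · obtain ⟨z, hz, haz⟩ := hYZ a haY
    exact ⟨z, Multiset.mem_add.2 (.inr hz), haz.le⟩

theorem isDershowitzMannaLT_of_cons_of_forall_le [Preorder α] {s t : Multiset α} {a : α}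
    (h : (a ::ₘ s).IsDershowitzMannaLT (a ::ₘ t)) (hmax : ∀ b ∈ t, b ≤ a) :
    s.IsDershowitzMannaLT t := by
  obtain ⟨X, Y, Z, hZ, hs, ht, hYZ⟩ := h
  have haX : a ∈ X := by
    refine (Multiset.mem_add.1 (hs ▸ Multiset.mem_cons_self a s)).resolve_right fun haY ↦ ?_
    obtain ⟨z, hz, haz⟩ := hYZ a haY
    have hzt : z ∈ a ::ₘ t := ht ▸ Multiset.mem_add.2 (.inr hz)
    rcases Multiset.mem_cons.1 hzt with rfl | hzt
    · exact haz.false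
    · exact (hmax z hzt).not_gt haz
  obtain ⟨X, rfl⟩ := Multiset.exists_cons_of_mem haX
  rw [Multiset.cons_add, Multiset.cons_inj_right] at hs ht
  exact ⟨X, Y, Z, hZ, hs, ht, hYZ⟩

theorem lex_lt_of_isDershowitzMannaLT [PartialOrder α] : ∀ {l l' : List α}, l'.SortedGE →
    (l : Multiset α).IsDershowitzMannaLT l' → List.Lex (· < ·) l l'
  | _, [], _, ⟨_, _, _, hZ, _, h, _⟩ => absurd (add_eq_zero.1 h.symm).2 hZ
  | [], _ :: _, _, _ => .nil
  | x :: l, y :: l', hl', h => by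
    obtain ⟨hy, htail⟩ := List.pairwise_cons.1 hl'.pairwise
    obtain ⟨z, hz, hxz⟩ :=
      exists_le_of_isDershowitzMannaLT h (Multiset.mem_coe.2 List.mem_cons_self)
    have hzy : z ≤ y := by
      rcases List.mem_cons.1 (Multiset.mem_coe.1 hz) with rfl | hz
      exacts [le_rfl, hy z hz]
    rcases (hxz.trans hzy).lt_or_eq with hxy | rfl
    · exact .rel hxy
    · exact .cons (lex_lt_of_isDershowitzMannaLT htail.sortedGE
        (isDershowitzMannaLT_of_cons_of_forall_le h hy))

theorem isDershowitzMannaLT_map [Preorder α] {s : Multiset ι} {u v : ι → α} (p : ι → Prop)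
    (hp : ∃ i ∈ s, p i) (heq : ∀ i ∈ s, ¬ p i → u i = v i)
    (hlt : ∀ i ∈ s, p i → ∃ i' ∈ s, p i' ∧ u i < v i') :
    (s.map u).IsDershowitzMannaLT (s.map v) := by
  classical
  have split (w : ι → α) :
      s.map w = (s.filter fun i ↦ ¬ p i).map w + (s.filter p).map w := by
    rw [← Multiset.map_add, add_comm, Multiset.filter_add_not]
  refine ⟨(s.filter fun i ↦ ¬ p i).map v, (s.filter p).map u, (s.filter p).map v, ?_, ?_,
    split v, ?_⟩
  · obtain ⟨i, hi, hpi⟩ := hp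
    have hvi := Multiset.mem_map_of_mem v (Multiset.mem_filter.2 ⟨hi, hpi⟩)
    exact fun hempty ↦ Multiset.notMem_zero _ (hempty ▸ hvi)
  · rw [split u, Multiset.map_congr rfl fun i hi ↦ ?_]
    exact heq i (Multiset.mem_filter.1 hi).1 (Multiset.mem_filter.1 hi).2
  · refine Multiset.forall_mem_map_iff.2 fun i hi ↦ ?_
    obtain ⟨i', hi', hpi', hlt'⟩ := hlt i (Multiset.mem_filter.1 hi).1 (Multiset.mem_filter.1 hi).2
    exact ⟨v i', Multiset.mem_map_of_mem v (Multiset.mem_filter.2 ⟨hi', hpi'⟩), hlt'⟩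

end MultisetOrder

section Allocation

variable {Agent Resource : Type*} {a b : Resource → Finset Agent}

theorem coe_kernel [Fintype Resource] (a : Resource → Finset Agent) :
    (kernel a : Multiset ℕ) = Finset.univ.val.map fun i ↦ (a i).card := by
  rw [kernel, Multiset.coe_reverse, Multiset.sort_eq]

theorem sortedGE_kernel [Fintype Resource] (a : Resource → Finset Agent) :
    (kernel a).SortedGE :=
  List.sortedGE_reverse.2 (Multiset.pairwise_sort _ _).sortedLE

theorem eq_of_mem_of_isAllocation {j : Agent} {i₁ i₂ : Resource} (ha : IsAllocation a)
    (h₁ : j ∈ a i₁) (h₂ : j ∈ a i₂) : i₁ = i₂ :=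
  by_contra fun hne ↦ Finset.disjoint_left.1 (ha.1 i₁ i₂ hne) h₁ h₂

/-- Every agent who changes resource when `a` is replaced by `b` gets a strictly smaller load. For
allocations this is the strict form of the blocking condition, imposed on the movers only. -/
def MoversImprove (a b : Resource → Finset Agent) : Prop :=
  ∀ j i₁ i₂, j ∈ a i₁ → j ∈ b i₂ → i₁ ≠ i₂ → (b i₂).card < (a i₁).card

theorem exists_ne_and_card_lt_of_moversImprove (ha : IsAllocation a) (hb : IsAllocation b)
    (himp : MoversImprove a b) {i : Resource} (hi : b i ≠ a i) :
    ∃ i', b i' ≠ a i' ∧ (b i).card < (a i').card := by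
  by_cases hsub : b i ⊆ a i
  · exact ⟨i, hi, Finset.card_lt_card (hsub.ssubset_of_ne hi)⟩
  · obtain ⟨j, hjb, hja⟩ := Finset.not_subset.1 hsub
    obtain ⟨i', hj⟩ := ha.2 j
    have hne : i' ≠ i := by
      rintro rfl
      exact hja hj
    have hchanged : b i' ≠ a i' := fun h ↦ hne (eq_of_mem_of_isAllocation hb (h ▸ hj) hjb)
    exact ⟨i', hchanged, himp j i' i hj hjb hne⟩

theorem lex_lt_kernel_of_moversImprove [Fintype Resource] (ha : IsAllocation a)
    (hb : IsAllocation b) (hba : b ≠ a) (himp : MoversImprove a b) :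
    List.Lex (· < ·) (kernel b) (kernel a) := by
  refine lex_lt_of_isDershowitzMannaLT (sortedGE_kernel a) ?_
  rw [coe_kernel, coe_kernel]
  refine isDershowitzMannaLT_map (fun i ↦ b i ≠ a i) ?_ ?_ ?_
  · simpa using Function.ne_iff.1 hba
  · exact fun i _ hi ↦ congrArg Finset.card (not_not.1 hi)
  · simpa using fun i ↦ exists_ne_and_card_lt_of_moversImprove ha hb himp (i := i)

variable [DecidableEq Agent] {f : Resource → Finset Agent}

theorem mem_coalition_of_blocksVia_of_move {c : Finset Agent} {j : Agent} {i₁ i₂ : Resource}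
    (h : BlocksVia f c a b) (h₁ : j ∈ a i₁) (h₂ : j ∈ b i₂) (hne : i₁ ≠ i₂) : j ∈ c := by
  obtain ⟨hb, -, hstay, -⟩ := h
  by_contra hj
  have hjb : j ∈ b i₁ \ c := hstay i₁ ▸ Finset.mem_sdiff.2 ⟨h₁, hj⟩
  exact hne (eq_of_mem_of_isAllocation hb (Finset.mem_sdiff.1 hjb).1 h₂)

theorem ne_of_blocksVia {c : Finset Agent} (h : BlocksVia f c a b) : b ≠ a := by
  obtain ⟨hb, -, -, -, j, -, i₁, i₂, h₁, h₂, hlt⟩ := h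
  rintro rfl
  obtain rfl := eq_of_mem_of_isAllocation hb h₁ h₂
  exact hlt.false

theorem moversImprove_of_blocksVia_singleton {j : Agent} (ha : IsAllocation a)
    (h : BlocksVia f {j} a b) : MoversImprove a b := by
  intro k i₁ i₂ h₁ h₂ hne
  obtain rfl := Finset.mem_singleton.1 (mem_coalition_of_blocksVia_of_move h h₁ h₂ hne)
  obtain ⟨hb, -, -, -, j', hj', i₁', i₂', h₁', h₂', hlt⟩ := h
  obtain rfl := Finset.mem_singleton.1 hj'
  rwa [eq_of_mem_of_isAllocation ha h₁ h₁', eq_of_mem_of_isAllocation hb h₂ h₂']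

theorem maximal_is_nash_general [Fintype Resource] (C : Set (Finset Agent))
    (ha : IsAllocation a)
    (hmax : ∀ abar, IsAllocation abar → Feasible f abar → ¬ BalanceDominates C abar a)
    (j : Agent) : ¬ Blocks f {j} a := by
  rintro ⟨b, hb⟩
  have himp : MoversImprove a b := moversImprove_of_blocksVia_singleton ha hb
  exact hmax b hb.1 hb.2.1
    (.inl (lex_lt_kernel_of_moversImprove ha hb.1 (ne_of_blocksVia hb) himp))

end Allocation

/-- Every feasible allocation maximal w.r.t. `C`-balance dominance is a Nash equilibrium. -/
theorem maximal_is_nash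
    {N M : Type*} [Fintype N] [DecidableEq N] [Fintype M] [DecidableEq M]
    [Nonempty N] [Nonempty M]
    (f : M → Finset N) (hf : ∀ j : N, ∃ i : M, j ∈ f i)
    (C : Set (Finset N)) (hC : IsPartitionStructure C)
    (a : M → Finset N) (ha : IsAllocation a) (haf : Feasible f a)
    (hmax : ∀ abar : M → Finset N, IsAllocation abar → Feasible f abar →
      ¬ BalanceDominates C abar a) :
    ∀ j : N, ¬ Blocks f {j} a := by
  exact maximal_is_nash_general C ha hmax
end

section
/- In any identical singleton congestion game with a partition coalition structure C, every feasible allocation a that is maximal with respect to the C-balance dominance relation is Pareto efficient, i.e., the grand coalition N does not block a. -/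
/-!
If the grand coalition blocks `a` via `b`, then no agent's congestion increases from `a` to `b`,
and some agent's decreases. Let `s` be the largest congestion under `a` of an improving agent.
The agents of congestion `t > s` are the same in `a` and `b`, and those of congestion `s` in `b`
form a proper subset of those in `a`. Each resource of cardinality `t` accounts for exactly `t`
agents of congestion `t`, so the multiplicities in the two kernels compare in the same way, and
the kernel of `b` is lexicographically smaller than that of `a`.
-/

variable {N M : Type*} [Fintype N] [DecidableEq N] [Fintype M] [DecidableEq M]

open Finset

theorem lex_of_count_lt {α : Type*} [LinearOrder α] {s : α} :
    ∀ {l₁ l₂ : List α}, l₂.SortedGE → (∀ t, s < t → l₁.count t = l₂.count t) →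
      l₁.count s < l₂.count s → List.Lex (· < ·) l₁ l₂
  | _, [], _, _, hlt => by simp at hlt
  | [], _ :: _, _, _, _ => .nil
  | x :: l₁, y :: l₂, hl₂, heq, hlt => by
    have hhead : ∃ z ∈ y :: l₂, x ≤ z := by
      rcases lt_or_ge s x with hsx | hxs
      · have hcount : 0 < (x :: l₁).count x := List.count_pos_iff.2 List.mem_cons_self
        exact ⟨x, List.count_pos_iff.1 (heq x hsx ▸ hcount), le_rfl⟩
      · exact ⟨s, List.count_pos_iff.1 (Nat.zero_lt_of_lt hlt), hxs⟩
    obtain ⟨z, hz, hxz⟩ := hhead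
    have hpair := List.pairwise_cons.1 hl₂.pairwise
    have hzy : z ≤ y := (List.mem_cons.1 hz).elim le_of_eq (hpair.1 z)
    rcases (hxz.trans hzy).lt_or_eq with hxy | rfl
    · exact .rel hxy
    · refine .cons (lex_of_count_lt (s := s) hpair.2.sortedGE (fun t ht => ?_) ?_)
      · simpa [List.count_cons] using heq t ht
      · simpa [List.count_cons] using hlt

theorem exists_card_fiber_lt_of_lt {ι α : Type*} [Fintype ι] [PartialOrder α] [DecidableEq α]
    {u v : ι → α} (h : u < v) :
    ∃ s, (∀ t, s < t → #{j | u j = t} = #{j | v j = t}) ∧ #{j | u j = s} < #{j | v j = s} := by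
  obtain ⟨hle, hlt⟩ := Pi.lt_def.1 h
  obtain ⟨j, hj, hmax⟩ := (Set.toFinite {j | u j < v j}).exists_maximalFor v _ hlt
  have eq_of_lt {k : ι} (hk : v j < v k) : u k = v k :=
    (hle k).eq_of_not_lt fun huv => hk.not_ge (hmax huv hk.le)
  have eq_of_le {k : ι} (hk : v j ≤ u k) : u k = v k :=
    (hle k).eq_of_not_lt fun huv => huv.ne (eq_of_lt (hk.trans_lt huv))
  refine ⟨v j, fun t ht => congrArg card (filter_congr fun k _ => ⟨?_, ?_⟩), card_lt_card ?_⟩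
  · rintro rfl
    exact (eq_of_le ht.le).symm
  · rintro rfl
    exact eq_of_lt ht
  · refine (ssubset_iff_of_subset (monotone_filter_right _ fun k _ hk => ?_)).2
      ⟨j, by simp, by simpa using hj.ne⟩
    exact (eq_of_le hk.ge).symm.trans hk

theorem kernel_sortedGE {I J : Type*} [Fintype I] (a : I → Finset J) : (kernel a).SortedGE :=
  List.sortedGE_reverse.2 (Multiset.pairwise_sort _ _).sortedLE

theorem count_kernel {I J : Type*} [Fintype I] (a : I → Finset J) (t : ℕ) :
    (kernel a).count t = #{i | #(a i) = t} := by
  rw [kernel, List.count_reverse, ← Multiset.coe_count, Multiset.sort_eq, Multiset.count_map]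
  simp only [eq_comm (a := t)]
  rfl

section Congestion

variable {I J : Type*} [Fintype I] [DecidableEq J] {f a b : I → Finset J}

/-- The congestion experienced by agent `j` under `a`: the cardinality of its resource. The sum has
a single term when `a` is an allocation, which avoids choosing the resource of `j`. -/
def congestion (a : I → Finset J) (j : J) : ℕ := ∑ i with j ∈ a i, #(a i)

theorem congestion_of_mem (ha : IsAllocation a) {i : I} {j : J} (hj : j ∈ a i) :
    congestion a j = #(a i) := by
  refine sum_eq_single_of_mem i (by simpa using hj) fun i' hi' hne => ?_
  exact absurd hj (disjoint_left.1 (ha.1 i' i hne) (mem_filter.1 hi').2)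

theorem card_filter_congestion_eq [Fintype J] (ha : IsAllocation a) (t : ℕ) :
    #{j | congestion a j = t} = (kernel a).count t * t := by
  have hunion : ({j | congestion a j = t} : Finset J) =
      ({i | #(a i) = t} : Finset I).biUnion a := by
    ext j
    obtain ⟨i, hi⟩ := ha.2 j
    simp only [mem_filter, mem_univ, true_and, mem_biUnion]
    refine ⟨fun h => ⟨i, congestion_of_mem ha hi ▸ h, hi⟩, ?_⟩
    rintro ⟨i', hcard, hi'⟩
    rw [congestion_of_mem ha hi', hcard]
  rw [hunion, card_biUnion fun i _ i' _ => ha.1 i i', count_kernel]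
  exact sum_const_nat fun i hi => (mem_filter.1 hi).2

theorem kernel_lex_of_congestion_lt [Finite J] (ha : IsAllocation a) (hb : IsAllocation b)
    (h : congestion b < congestion a) : List.Lex (· < ·) (kernel b) (kernel a) := by
  cases nonempty_fintype J
  obtain ⟨s, heq, hlt⟩ := exists_card_fiber_lt_of_lt h
  simp only [card_filter_congestion_eq ha, card_filter_congestion_eq hb] at heq hlt
  exact lex_of_count_lt (kernel_sortedGE a)
    (fun t ht => Nat.eq_of_mul_eq_mul_right (Nat.zero_lt_of_lt ht) (heq t ht))
    (Nat.lt_of_mul_lt_mul_right hlt)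

theorem BlocksVia.congestion_lt [Fintype J] (ha : IsAllocation a) (h : BlocksVia f univ a b) :
    congestion b < congestion a := by
  obtain ⟨hb, -, -, hle, j, -, i₁, i₂, hj₁, hj₂, hlt⟩ := h
  refine Pi.lt_def.2 ⟨fun k => ?_, j, ?_⟩
  · obtain ⟨i, hi⟩ := ha.2 k
    obtain ⟨i', hi'⟩ := hb.2 k
    rw [congestion_of_mem ha hi, congestion_of_mem hb hi']
    exact hle k (mem_univ k) i i' hi hi'
  · rwa [congestion_of_mem ha hj₁, congestion_of_mem hb hj₂]

theorem maximal_is_pareto_general [Fintype J] (ha : IsAllocation a)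
    (hmin : ∀ b : I → Finset J, IsAllocation b → Feasible f b →
      ¬ List.Lex (· < ·) (kernel b) (kernel a)) :
    ¬ Blocks f univ a := by
  rintro ⟨b, hblock⟩
  have hb : IsAllocation b := hblock.1
  have hbf : Feasible f b := hblock.2.1
  exact hmin b hb hbf (kernel_lex_of_congestion_lt ha hb (hblock.congestion_lt ha))

end Congestion

/-- Every feasible allocation maximal w.r.t. `C`-balance dominance is Pareto efficient. -/
theorem maximal_is_pareto
    {N M : Type*} [Fintype N] [DecidableEq N] [Fintype M] [DecidableEq M]
    [Nonempty N] [Nonempty M]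
    (f : M → Finset N) (hf : ∀ j : N, ∃ i : M, j ∈ f i)
    (C : Set (Finset N)) (hC : IsPartitionStructure C)
    (a : M → Finset N) (ha : IsAllocation a) (haf : Feasible f a)
    (hmax : ∀ abar : M → Finset N, IsAllocation abar → Feasible f abar →
      ¬ BalanceDominates C abar a) :
    ¬ Blocks f Finset.univ a :=
  maximal_is_pareto_general ha fun b hb hbf hlex => hmax b hb hbf (.inl hlex)
end

section
/- Let C be a partition coalition structure of an ISCG, let j₁ be an agent in a coalition c ∈ C, and let allocations a and ā be such that ā = a ⊕ i₁→(j₁)→i₂ (i.e., j₁ moves from resource i₁ to resource i₂ and all other agents keep their resource). If |a_{i₁}| = |a_{i₂}| + 1 and |c ∩ a_{i₁}| ≥ |c ∩ a_{i₂}| + 2, then ā C-balance dominates a. -/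
variable {N M : Type*} [Fintype N] [DecidableEq N] [Fintype M] [DecidableEq M]

/-!
The load profiles are compared through the Dershowitz–Manna order: one multiset is below another if
it arises by replacing a nonempty part of it by elements each of which is smaller than some removed
element. On nonincreasing lists over a linear order this is the lexicographic order.

Inside a coalition containing the moving agent, the loads `p` and `q` of its two resources become
`p - 1` and `q + 1`. If `q + 2 ≤ p`, both new loads are smaller than `p`, so the profile decreases;
if `p = q + 1`, the loads are merely swapped, so the profile is unchanged. Both cases apply in
particular to a set containing all assigned agents, whose profile is the kernel.
-/

section DershowitzManna

theorem not_isDershowitzMannaLT_self {α : Type*} [Preorder α] (s : Multiset α) :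
    ¬ s.IsDershowitzMannaLT s := by
  classical
  rintro ⟨X, Y, Z, hZ, hXY, hXZ, hYZ⟩
  obtain rfl : Y = Z := add_left_cancel (hXY.symm.trans hXZ)
  obtain ⟨m, hm⟩ := Y.toFinset.exists_maximal (Multiset.toFinset_nonempty.2 hZ)
  obtain ⟨z, hz, hmz⟩ := hYZ m (Multiset.mem_toFinset.1 hm.prop)
  exact hm.not_gt (Multiset.mem_toFinset.2 hz) hmz

theorem isDershowitzMannaLT_of_lex {α : Type*} [Preorder α] {l l' : List α}
    (hl : l.Pairwise (· ≥ ·)) (h : List.Lex (· < ·) l l') :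
    (l : Multiset α).IsDershowitzMannaLT l' := by
  induction h with
  | @nil b l' => exact ⟨0, 0, (b :: l' : List α), by simp, by simp, by simp, by simp⟩
  | @rel a l b l' hab =>
    refine ⟨0, (a :: l : List α), (b :: l' : List α), by simp, by simp, by simp, ?_⟩
    have hle : ∀ y ∈ a :: l, y ≤ a := List.forall_mem_cons.2 ⟨le_rfl, (List.pairwise_cons.1 hl).1⟩
    exact fun y hy => ⟨b, by simp, (hle y hy).trans_lt hab⟩
  | @cons a l l' _ ih =>
    obtain ⟨X, Y, Z, hZ, hXY, hXZ, hYZ⟩ := ih hl.of_cons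
    refine ⟨a ::ₘ X, Y, Z, hZ, ?_, ?_, hYZ⟩
    · rw [← Multiset.cons_coe, hXY, Multiset.cons_add]
    · rw [← Multiset.cons_coe, hXZ, Multiset.cons_add]

theorem lex_of_isDershowitzMannaLT {α : Type*} [LinearOrder α] {l l' : List α}
    (hl' : l'.Pairwise (· ≥ ·)) (h : (l : Multiset α).IsDershowitzMannaLT l') :
    List.Lex (· < ·) l l' := by
  rcases trichotomous_of (List.Lex (· < ·)) l l' with hlt | rfl | hgt
  · exact hlt
  · exact absurd h (not_isDershowitzMannaLT_self _)
  · exact absurd (h.trans (isDershowitzMannaLT_of_lex hl' hgt)) (not_isDershowitzMannaLT_self _)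

theorem lex_reverse_sort_of_isDershowitzMannaLT {α : Type*} [LinearOrder α] {s t : Multiset α}
    (h : s.IsDershowitzMannaLT t) :
    List.Lex (· < ·) (s.sort (· ≤ ·)).reverse (t.sort (· ≤ ·)).reverse := by
  apply lex_of_isDershowitzMannaLT (List.pairwise_reverse.2 (t.pairwise_sort (· ≤ ·)))
  simpa only [Multiset.coe_reverse, Multiset.sort_eq] using h

theorem isDershowitzMannaLT_map_univ {ι α : Type*} [Fintype ι] [Preorder α] {g g' : ι → α}
    {T : Finset ι} (hT : T.Nonempty) (heq : ∀ i ∉ T, g' i = g i)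
    (hlt : ∀ i ∈ T, ∃ k ∈ T, g' i < g k) :
    (Finset.univ.val.map g').IsDershowitzMannaLT (Finset.univ.val.map g) := by
  classical
  have hsplit (f : ι → α) : Finset.univ.val.map f = Tᶜ.val.map f + T.val.map f := by
    rw [← Multiset.map_add, ← Finset.disjUnion_val _ _ disjoint_compl_left,
      Finset.disjUnion_eq_union, Finset.union_comm, Finset.union_compl]
  have hcompl : Tᶜ.val.map g' = Tᶜ.val.map g :=
    Multiset.map_congr rfl fun i hi => heq i (Finset.mem_compl.1 hi)
  refine ⟨Tᶜ.val.map g, T.val.map g', T.val.map g, ?_, hcompl ▸ hsplit g', hsplit g, ?_⟩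
  · simpa using hT.ne_empty
  · simpa using hlt

end DershowitzManna

/-- The paper's `a ⊕ i₁→(j)→i₂`: agent `j` is removed from resource `i₁` and added to `i₂`.
It is defined for every family of sets of agents and is meant for `j ∈ a i₁` and `j ∉ a i₂`. -/
def moveAgent {N M : Type*} [DecidableEq N] [DecidableEq M]
    (a : M → Finset N) (j : N) (i₁ i₂ : M) : M → Finset N :=
  Function.update (Function.update a i₁ ((a i₁).erase j)) i₂ (insert j (a i₂))

section Move

variable {N M : Type*} [DecidableEq N] [DecidableEq M]
  {a : M → Finset N} {c : Finset N} {j : N} {i₁ i₂ : M}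

theorem moveAgent_source (hi : i₁ ≠ i₂) : moveAgent a j i₁ i₂ i₁ = (a i₁).erase j := by
  simp [moveAgent, hi]

theorem moveAgent_target : moveAgent a j i₁ i₂ i₂ = insert j (a i₂) := by
  simp [moveAgent]

theorem moveAgent_of_ne {i : M} (h₁ : i ≠ i₁) (h₂ : i ≠ i₂) : moveAgent a j i₁ i₂ i = a i := by
  simp [moveAgent, h₁, h₂]

theorem eq_moveAgent {abar : M → Finset N} (ha : Pairwise (Function.onFun Disjoint a))
    (habar : Pairwise (Function.onFun Disjoint abar)) (hi : i₁ ≠ i₂)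
    (h₁ : j ∈ a i₁) (h₂ : j ∈ abar i₂) (hrest : ∀ k ≠ j, ∀ i, k ∈ a i ↔ k ∈ abar i) :
    abar = moveAgent a j i₁ i₂ := by
  have hj_a {i : M} (hne : i ≠ i₁) : j ∉ a i := fun h => Finset.disjoint_left.1 (ha hne) h h₁
  have hj_abar {i : M} (hne : i ≠ i₂) : j ∉ abar i :=
    fun h => Finset.disjoint_left.1 (habar hne) h h₂
  ext i k
  by_cases hk : k = j
  · subst hk
    by_cases hi₂ : i = i₂
    · simp [hi₂, h₂, moveAgent_target]
    by_cases hi₁ : i = i₁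
    · simp [hi₁, hj_abar hi, moveAgent_source hi]
    · simp [hj_a hi₁, hj_abar hi₂, moveAgent_of_ne hi₁ hi₂]
  · rw [← hrest k hk i]
    by_cases hi₂ : i = i₂
    · simp [hi₂, hk, moveAgent_target]
    by_cases hi₁ : i = i₁
    · simp [hi₁, hk, moveAgent_source hi]
    · rw [moveAgent_of_ne hi₁ hi₂]

theorem moveAgent_subset (hc : ∀ k, a k ⊆ c) (hj : j ∈ c) (i : M) :
    moveAgent a j i₁ i₂ i ⊆ c := by
  by_cases hi₂ : i = i₂
  · rw [hi₂, moveAgent_target]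
    exact Finset.insert_subset hj (hc i₂)
  by_cases hi₁ : i = i₁
  · subst hi₁
    rw [moveAgent_source hi₂]
    exact (Finset.erase_subset _ _).trans (hc i)
  · rw [moveAgent_of_ne hi₁ hi₂]
    exact hc i

theorem card_inter_moveAgent_source_add_one (hj : j ∈ c) (h₁ : j ∈ a i₁) (hi : i₁ ≠ i₂) :
    (c ∩ moveAgent a j i₁ i₂ i₁).card + 1 = (c ∩ a i₁).card := by
  rw [moveAgent_source hi, Finset.inter_erase,
    Finset.card_erase_add_one (Finset.mem_inter.2 ⟨hj, h₁⟩)]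

theorem card_inter_moveAgent_target (hj : j ∈ c) (h₂ : j ∉ a i₂) :
    (c ∩ moveAgent a j i₁ i₂ i₂).card = (c ∩ a i₂).card + 1 := by
  rw [moveAgent_target, Finset.inter_insert_of_mem hj,
    Finset.card_insert_of_notMem fun h => h₂ (Finset.mem_inter.1 h).2]

theorem inter_moveAgent_of_notMem (hj : j ∉ c) (i : M) :
    c ∩ moveAgent a j i₁ i₂ i = c ∩ a i := by
  by_cases hi₂ : i = i₂
  · rw [hi₂, moveAgent_target, Finset.inter_insert_of_notMem hj]
  by_cases hi₁ : i = i₁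
  · subst hi₁
    rw [moveAgent_source hi₂, Finset.inter_erase,
      Finset.erase_eq_of_notMem fun h => hj (Finset.mem_inter.1 h).1]
  · rw [moveAgent_of_ne hi₁ hi₂]

end Move

section Kernel

theorem kernel_eq_ckernel_of_forall_subset {N M : Type*} [DecidableEq N] [Fintype M]
    {a : M → Finset N} {u : Finset N} (hu : ∀ i, a i ⊆ u) : kernel a = ckernel u a := by
  simp only [kernel, ckernel, Finset.inter_eq_right.2 (hu _)]

variable {N M : Type*} [DecidableEq N] [Fintype M] [DecidableEq M]
  {a : M → Finset N} {c : Finset N} {j : N} {i₁ i₂ : M}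

theorem ckernel_moveAgent_of_notMem (hj : j ∉ c) :
    ckernel c (moveAgent a j i₁ i₂) = ckernel c a := by
  simp only [ckernel, inter_moveAgent_of_notMem hj]

theorem ckernel_moveAgent_of_card_eq_add_one (hj : j ∈ c) (h₁ : j ∈ a i₁) (h₂ : j ∉ a i₂)
    (hcard : (c ∩ a i₁).card = (c ∩ a i₂).card + 1) :
    ckernel c (moveAgent a j i₁ i₂) = ckernel c a := by
  have hi : i₁ ≠ i₂ := fun h => h₂ (h ▸ h₁)
  have hsource := card_inter_moveAgent_source_add_one hj h₁ hi
  have htarget := card_inter_moveAgent_target (i₁ := i₁) hj h₂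
  have hswap : (fun i => (c ∩ moveAgent a j i₁ i₂ i).card) =
      (fun i => (c ∩ a i).card) ∘ Equiv.swap i₁ i₂ := by
    funext i
    by_cases hi₁ : i = i₁
    · subst hi₁
      rw [Function.comp_apply, Equiv.swap_apply_left]
      omega
    by_cases hi₂ : i = i₂
    · subst hi₂
      rw [Function.comp_apply, Equiv.swap_apply_right]
      omega
    · rw [Function.comp_apply, Equiv.swap_apply_of_ne_of_ne hi₁ hi₂, moveAgent_of_ne hi₁ hi₂]
  rw [ckernel, ckernel, hswap, ← Multiset.map_map, Multiset.map_univ_val_equiv]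

theorem lex_ckernel_moveAgent (hj : j ∈ c) (h₁ : j ∈ a i₁) (h₂ : j ∉ a i₂)
    (hcard : (c ∩ a i₂).card + 2 ≤ (c ∩ a i₁).card) :
    List.Lex (· < ·) (ckernel c (moveAgent a j i₁ i₂)) (ckernel c a) := by
  have hi : i₁ ≠ i₂ := fun h => h₂ (h ▸ h₁)
  have hsource := card_inter_moveAgent_source_add_one hj h₁ hi
  have htarget := card_inter_moveAgent_target (i₁ := i₁) hj h₂
  apply lex_reverse_sort_of_isDershowitzMannaLT
  apply isDershowitzMannaLT_map_univ (T := {i₁, i₂}) (Finset.insert_nonempty _ _)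
  · intro i hiT
    obtain ⟨hi₁, hi₂⟩ : i ≠ i₁ ∧ i ≠ i₂ := by simpa using hiT
    rw [moveAgent_of_ne hi₁ hi₂]
  · refine fun i hiT => ⟨i₁, Finset.mem_insert_self _ _, ?_⟩
    obtain rfl | rfl : i = i₁ ∨ i = i₂ := by simpa using hiT
    all_goals omega

theorem kernel_moveAgent_of_card_eq_add_one (h₁ : j ∈ a i₁) (h₂ : j ∉ a i₂)
    (hcard : (a i₁).card = (a i₂).card + 1) : kernel (moveAgent a j i₁ i₂) = kernel a := by
  obtain ⟨u, hau⟩ : ∃ u, ∀ i, a i ⊆ u :=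
    ⟨Finset.univ.biUnion a, fun i => Finset.subset_biUnion_of_mem a (Finset.mem_univ i)⟩
  have hj : j ∈ u := hau i₁ h₁
  rw [kernel_eq_ckernel_of_forall_subset hau,
    kernel_eq_ckernel_of_forall_subset (moveAgent_subset hau hj)]
  apply ckernel_moveAgent_of_card_eq_add_one hj h₁ h₂
  simpa only [Finset.inter_eq_right.2 (hau _)] using hcard

theorem lex_kernel_moveAgent (h₁ : j ∈ a i₁) (h₂ : j ∉ a i₂)
    (hcard : (a i₂).card + 2 ≤ (a i₁).card) :
    List.Lex (· < ·) (kernel (moveAgent a j i₁ i₂)) (kernel a) := by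
  obtain ⟨u, hau⟩ : ∃ u, ∀ i, a i ⊆ u :=
    ⟨Finset.univ.biUnion a, fun i => Finset.subset_biUnion_of_mem a (Finset.mem_univ i)⟩
  have hj : j ∈ u := hau i₁ h₁
  rw [kernel_eq_ckernel_of_forall_subset hau,
    kernel_eq_ckernel_of_forall_subset (moveAgent_subset hau hj)]
  apply lex_ckernel_moveAgent hj h₁ h₂
  simpa only [Finset.inter_eq_right.2 (hau _)] using hcard

end Kernel

theorem move_balance_dominates_of_coalition_card_general
    {N M : Type*} [DecidableEq N] [Fintype M] [DecidableEq M]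
    {C : Set (Finset N)} (hC : C.PairwiseDisjoint id)
    {c : Finset N} (hc : c ∈ C) {j : N} (hj : j ∈ c)
    {i₁ i₂ : M} {a : M → Finset N} (h₁ : j ∈ a i₁) (h₂ : j ∉ a i₂)
    (hcard : (a i₂).card + 1 ≤ (a i₁).card)
    (hccard : (c ∩ a i₂).card + 2 ≤ (c ∩ a i₁).card) :
    BalanceDominates C (moveAgent a j i₁ i₂) a := by
  have hlex := lex_ckernel_moveAgent hj h₁ h₂ hccard
  rcases hcard.eq_or_lt with heq | hlt
  · refine Or.inr
      ⟨kernel_moveAgent_of_card_eq_add_one h₁ h₂ heq.symm, fun c' hc' => ?_, c, hc, hlex⟩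
    rcases eq_or_ne c' c with rfl | hne
    · exact Or.inr hlex
    · exact Or.inl (ckernel_moveAgent_of_notMem (Finset.disjoint_right.1 (hC hc' hc hne) hj))
  · exact Or.inl (lex_kernel_moveAgent h₁ h₂ hlt)

/-- Lemma 2(b): if `abar = a ⊕ i₁→(j₁)→i₂` with `|a i₁| = |a i₂| + 1` and
`|c ∩ a i₁| ≥ |c ∩ a i₂| + 2`, then `abar` `C`-balance dominates `a`. -/
theorem move_balance_dominates_of_coalition_card
    {N M : Type*} [Fintype N] [DecidableEq N] [Fintype M] [DecidableEq M]
    (C : Set (Finset N)) (hC : IsPartitionStructure C)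
    (c : Finset N) (hc : c ∈ C) (j₁ : N) (hj₁ : j₁ ∈ c)
    (i₁ i₂ : M) (hi : i₁ ≠ i₂)
    (a abar : M → Finset N) (ha : IsAllocation a) (habar : IsAllocation abar)
    (h₁ : j₁ ∈ a i₁) (h₂ : j₁ ∈ abar i₂)
    (hrest : ∀ j : N, j ≠ j₁ → ∀ i : M, j ∈ a i ↔ j ∈ abar i)
    (hcard : (a i₁).card = (a i₂).card + 1)
    (hccard : (c ∩ a i₂).card + 2 ≤ (c ∩ a i₁).card) :
    BalanceDominates C abar a := by
  obtain rfl := eq_moveAgent (fun i k => ha.1 i k) (fun i k => habar.1 i k) hi h₁ h₂ hrest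
  exact move_balance_dominates_of_coalition_card_general (fun c₁ hc₁ c₂ hc₂ => hC.2.1 c₁ hc₁ c₂ hc₂)
    hc hj₁ h₁ (Finset.disjoint_left.1 (ha.1 i₁ i₂ hi) h₁) hcard.ge hccard
end

section
/- The existence guarantee of Theorem 1 fails for coalition structures with overlapping coalitions: there exist an ISCG and a coalition structure C that is not a partition such that no feasible allocation is C-stable. Specifically: in the ISCG with resources M = {1,2} and agents N = {1,2,3}, where f₁ = {1,3} and f₂ = {2,3} (agent 1 can only access resource 1, agent 2 can only access resource 2, agent 3 can access both), for the coalition structure C = {{1,3},{2,3}}, no feasible allocation is C-stable. -/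
variable {N M : Type*} [Fintype N] [DecidableEq N] [Fintype M] [DecidableEq M]

/-- Example 4: agent 1 can only access resource 1, agent 2 can only access resource 2, and
agent 3 can access both (agent `k` encoded as `k - 1 : Fin 3`, resource likewise). -/
def exF4 : Fin 2 → Finset (Fin 3)
  | 0 => {0, 2}
  | 1 => {1, 2}

/-- The overlapping coalition structure `C = {{1,3},{2,3}}`. -/
def exC4 : Set (Finset (Fin 3)) := {{0, 2}, {1, 2}}

/-!
Suppose that the sets `f p` pairwise meet in exactly one agent `x`, and that each of them has
further members. All agents other than `x` are tied to one resource, so a feasible allocation is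
determined by the resource `p` that `x` uses, and `p` is then filled by the whole coalition `f p`.
If `f q` is no larger than `f p`, then `f p` blocks by sending `x` to `q`: there `x` shares with at
most as many agents as before, while the agents left behind at `p` strictly gain. If every `p` has
such a `q`, no feasible allocation is stable for the coalitions `f p`; the example is the case of
two resources, with `x` the third agent.
-/

section Reassign

variable {Agent Resource : Type*} {f a : Resource → Finset Agent} {c : Finset Agent}
  {x y : Agent} {i p q : Resource}

lemma IsAllocation.eq_of_mem (ha : IsAllocation a) (hp : x ∈ a p) (hq : x ∈ a q) : p = q := by
  by_contra hpq
  exact Finset.disjoint_left.mp (ha.1 p q hpq) hp hq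

variable [DecidableEq Agent]

lemma IsAllocation.eq_of_feasible_of_pairwise_inter_eq_singleton (ha : IsAllocation a)
    (haf : Feasible f a) (hf : Pairwise fun r s => f r ∩ f s = {x}) (hxp : x ∈ a p) :
    a p = f p := by
  refine (haf p).antisymm fun j hjp => ?_
  obtain ⟨r, hjr⟩ := ha.2 j
  obtain rfl | hpr := eq_or_ne p r
  · exact hjr
  · have hjx : j ∈ ({x} : Finset Agent) := hf hpr ▸ Finset.mem_inter.mpr ⟨hjp, haf r hjr⟩
    rwa [Finset.mem_singleton.mp hjx]

variable [DecidableEq Resource]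

/-- The allocation obtained from `a` by sending agent `x` to resource `q`, all other agents staying
where they are. -/
def reassign (a : Resource → Finset Agent) (x : Agent) (q : Resource) : Resource → Finset Agent :=
  fun i => if i = q then insert x (a i) else (a i).erase x

lemma reassign_self : reassign a x q q = insert x (a q) := if_pos rfl

lemma reassign_of_ne (hi : i ≠ q) : reassign a x q i = (a i).erase x := if_neg hi

lemma mem_reassign_self_iff : x ∈ reassign a x q i ↔ i = q := by
  obtain rfl | hi := eq_or_ne i q
  · simp [reassign_self]
  · simp [reassign_of_ne hi, hi]

lemma mem_reassign_iff_of_ne (hyx : y ≠ x) : y ∈ reassign a x q i ↔ y ∈ a i := by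
  obtain rfl | hi := eq_or_ne i q
  · simp [reassign_self, hyx]
  · simp [reassign_of_ne hi, hyx]

lemma IsAllocation.reassign (ha : IsAllocation a) (x : Agent) (q : Resource) :
    IsAllocation (reassign a x q) := by
  refine ⟨fun r s hrs => Finset.disjoint_left.mpr fun j hjr hjs => hrs ?_, fun j => ?_⟩
  · obtain rfl | hjx := eq_or_ne j x
    · exact (mem_reassign_self_iff.mp hjr).trans (mem_reassign_self_iff.mp hjs).symm
    · exact ha.eq_of_mem ((mem_reassign_iff_of_ne hjx).mp hjr) ((mem_reassign_iff_of_ne hjx).mp hjs)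
  · obtain rfl | hjx := eq_or_ne j x
    · exact ⟨q, mem_reassign_self_iff.mpr rfl⟩
    · exact (ha.2 j).imp fun r hjr => (mem_reassign_iff_of_ne hjx).mpr hjr

lemma Feasible.reassign (haf : Feasible f a) (hxq : x ∈ f q) : Feasible f (reassign a x q) := by
  intro r j hjr
  obtain rfl | hjx := eq_or_ne j x
  · rwa [mem_reassign_self_iff.mp hjr]
  · exact haf r ((mem_reassign_iff_of_ne hjx).mp hjr)

lemma reassign_sdiff (hxc : x ∈ c) : reassign a x q i \ c = a i \ c := by
  ext j
  simp only [Finset.mem_sdiff]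
  exact and_congr_left fun hjc => mem_reassign_iff_of_ne (ne_of_mem_of_not_mem hxc hjc).symm

end Reassign

section Blocking

variable {Agent Resource : Type*} [DecidableEq Agent] {f a : Resource → Finset Agent}
  {c : Finset Agent} {x y : Agent} {p q : Resource}

lemma IsAllocation.blocks_of_card_lt (ha : IsAllocation a) (haf : Feasible f a)
    (hcq : Disjoint c (a q)) (hxq : x ∈ f q) (hxc : x ∈ c) (hxp : x ∈ a p)
    (hyc : y ∈ c) (hyp : y ∈ a p) (hyx : y ≠ x) (hcard : (a q).card < (a p).card) :
    Blocks f c a := by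
  classical
  have hpq : p ≠ q := fun h => hcard.ne (h ▸ rfl)
  refine ⟨_, ha.reassign x q, haf.reassign hxq,
    fun i => (reassign_sdiff hxc).symm, ?weak, y, hyc, p, p, hyp,
    (mem_reassign_iff_of_ne hyx).mpr hyp, ?strict⟩
  case weak =>
    intro j hjc r s hjr hjs
    obtain rfl | hjx := eq_or_ne j x
    · obtain rfl := ha.eq_of_mem hxp hjr
      obtain rfl := mem_reassign_self_iff.mp hjs
      rw [reassign_self]
      exact (Finset.card_insert_le _ _).trans hcard
    · obtain rfl := ha.eq_of_mem hjr ((mem_reassign_iff_of_ne hjx).mp hjs)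
      have hrq : r ≠ q := by
        rintro rfl
        exact Finset.disjoint_left.mp hcq hjc hjr
      rw [reassign_of_ne hrq]
      exact Finset.card_erase_le
  case strict =>
    rw [reassign_of_ne hpq]
    exact Finset.card_erase_lt_of_mem hxp

lemma not_isPartitionStructure_range_of_pairwise_inter_eq_singleton
    (hf : Pairwise fun p q => f p ∩ f q = {x}) (hnt : ∀ p, (f p).Nontrivial)
    (hother : ∀ p : Resource, ∃ q, q ≠ p) :
    ¬ IsPartitionStructure (Set.range f) := by
  rintro ⟨-, hdisj, hcover⟩
  obtain ⟨_, ⟨p, rfl⟩, -⟩ := hcover x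
  obtain ⟨q, hqp⟩ := hother p
  have hinter : f p ∩ f q = {x} := hf hqp.symm
  have hne : f p ≠ f q := by
    intro h
    rw [← h, Finset.inter_self] at hinter
    exact (hnt p).ne_singleton hinter
  have hempty : f p ∩ f q = ∅ := Finset.disjoint_iff_inter_eq_empty.mp
    (hdisj _ ⟨p, rfl⟩ _ ⟨q, rfl⟩ hne)
  exact Finset.singleton_ne_empty x (hinter.symm.trans hempty)

lemma IsAllocation.blocks_of_pairwise_inter_eq_singleton (ha : IsAllocation a)
    (haf : Feasible f a) (hf : Pairwise fun r s => f r ∩ f s = {x})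
    (hnt : (f p).Nontrivial) (hxp : x ∈ a p) (hqp : q ≠ p) (hcard : (f q).card ≤ (f p).card) :
    Blocks f (f p) a := by
  have hap : a p = f p := ha.eq_of_feasible_of_pairwise_inter_eq_singleton haf hf hxp
  have hxq : x ∈ f q :=
    (Finset.mem_inter.mp ((hf hqp).symm ▸ Finset.mem_singleton_self x)).1
  have hxaq : x ∉ a q := fun h => hqp (ha.eq_of_mem h hxp)
  have hlt : (a q).card < (f q).card :=
    Finset.card_lt_card ((Finset.ssubset_iff_of_subset (haf q)).mpr ⟨x, hxq, hxaq⟩)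
  obtain ⟨y, hy, hyx⟩ := hnt.exists_ne x
  rw [← hap] at hy hcard ⊢
  exact ha.blocks_of_card_lt haf (ha.1 p q hqp.symm) hxq hxp hxp hy hy hyx (hlt.trans_le hcard)

theorem overlapping_coalitions_no_stable_example_general
    (hf : Pairwise fun p q => f p ∩ f q = {x}) (hnt : ∀ p, (f p).Nontrivial)
    (hcard : ∀ p, ∃ q, q ≠ p ∧ (f q).card ≤ (f p).card) :
    ¬ IsPartitionStructure (Set.range f) ∧
    ∀ a : Resource → Finset Agent, IsAllocation a → Feasible f a →
      ∃ c ∈ Set.range f, Blocks f c a := by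
  refine ⟨not_isPartitionStructure_range_of_pairwise_inter_eq_singleton hf hnt
    fun p => (hcard p).imp fun _ h => h.1, fun a ha haf => ?_⟩
  obtain ⟨p, hxp⟩ := ha.2 x
  obtain ⟨q, hqp, hle⟩ := hcard p
  exact ⟨f p, ⟨p, rfl⟩, ha.blocks_of_pairwise_inter_eq_singleton haf hf (hnt p) hxp hqp hle⟩

end Blocking

lemma exC4_eq_range_exF4 : exC4 = Set.range exF4 := by
  ext c
  simp [exC4, exF4, eq_comm]

lemma pairwise_exF4_inter_eq_singleton : Pairwise fun p q => exF4 p ∩ exF4 q = {2} := by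
  unfold Pairwise
  decide

/-- Example 4: for the non-partition coalition structure `C = {{1,3},{2,3}}`,
no feasible allocation is `C`-stable. -/
theorem overlapping_coalitions_no_stable_example :
    ¬ IsPartitionStructure exC4 ∧
    ∀ a : Fin 2 → Finset (Fin 3), IsAllocation a → Feasible exF4 a →
      ∃ c ∈ exC4, Blocks exF4 c a := by
  rw [exC4_eq_range_exF4]
  exact overlapping_coalitions_no_stable_example_general pairwise_exF4_inter_eq_singleton
    (hnt := by decide) (hcard := by decide)
end
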